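/- arXiv:2405.02729 — 2 statements merged into one kernel-verified Lean document; each statement's English description precedes it below -/
import Mathlib

section
/- Let τ ∈ T_pc^∞(I). Then there exists a non-increasing, non-negative function f* ∈ L¹(I,λ) with ∫₀¹ f* dλ = 1 such that the probability measure μ = f*·λ is τ-invariant (i.e., μ(τ⁻¹(A)) = μ(A) for every Borel set A ⊆ [0,1]). Moreover μ is the unique τ-invariant probability measure absolutely continuous with respect to λ. -/
open MeasureTheory Set Filter

/-- Lebesgue measure on the unit interval `I = [0,1]`. -/
noncomputable def lam : MeasureTheory.Measure ℝ := MeasureTheory.volume.restrict (Set.Icc 0 1)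

/-- The class `T_pc^∞(I)` of piecewise convex maps with countably many branches, with
partition points `0 = a₀ < a₁ ≤ 1`, branches on `[a i, c i) ⊆ [a₁, 1]`, first branch on
`[0, a₁)` with right derivative `α₁ > 1` at `0`, and right derivatives `d i = τ'(a i) > 0`
at the left endpoints with `∑ 1 / d i < ∞`. -/
structure TpcInfty (τ : ℝ → ℝ) (a₁ α₁ : ℝ) (a c d : ℕ → ℝ) : Prop where
  mapsTo : Set.MapsTo τ (Set.Icc 0 1) (Set.Icc 0 1)
  a₁_pos : 0 < a₁
  a₁_le : a₁ ≤ 1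
  branch_sub : ∀ i, a₁ ≤ a i ∧ a i < c i ∧ c i ≤ 1
  branch_disj : Pairwise (Function.onFun Disjoint fun i => Set.Ico (a i) (c i))
  cover : ∃ E : Set ℝ, E.Countable ∧
    Set.Icc (0:ℝ) 1 ⊆ (Set.Ico 0 a₁ ∪ ⋃ i, Set.Ico (a i) (c i)) ∪ E
  cont₀ : ContinuousOn τ (Set.Ico 0 a₁)
  conv₀ : ConvexOn ℝ (Set.Ico 0 a₁) τ
  diff₀ : ∀ x ∈ Set.Ico 0 a₁, DifferentiableWithinAt ℝ τ (Set.Ico 0 a₁) x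
  map₀ : τ 0 = 0
  deriv₀ : HasDerivWithinAt τ α₁ (Set.Ici 0) 0
  α₁_gt : 1 < α₁
  cont : ∀ i, ContinuousOn τ (Set.Ico (a i) (c i))
  conv : ∀ i, ConvexOn ℝ (Set.Ico (a i) (c i)) τ
  diff : ∀ i, ∀ x ∈ Set.Ico (a i) (c i), DifferentiableWithinAt ℝ τ (Set.Ico (a i) (c i)) x
  map_a : ∀ i, τ (a i) = 0
  deriv_a : ∀ i, HasDerivWithinAt τ (d i) (Set.Ici (a i)) (a i)
  d_pos : ∀ i, 0 < d i
  sum_d : Summable fun i => 1 / d i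


/-- Normalised piecewise convex map with branches indexed by `ℕ`. -/
structure PC (T : ℝ → ℝ) (a₁ : ℝ) (A C D : ℕ → ℝ) : Prop where
  meas : Measurable T
  maps : ∀ x, T x ∈ Icc (0:ℝ) 1
  a_pos : 0 < a₁
  a_lt : a₁ < 1
  A0 : A 0 = 0
  A_ge : ∀ i, i ≠ 0 → a₁ ≤ A i
  A_nn : ∀ i, 0 ≤ A i
  A_lt : ∀ i, A i < C i
  C_le : ∀ i, C i ≤ 1
  disj : Pairwise (Function.onFun Disjoint fun i => Ico (A i) (C i))
  cover : (Icc (0:ℝ) 1 \ ⋃ i, Ico (A i) (C i)).Countable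
  conv : ∀ i, ConvexOn ℝ (Ico (A i) (C i)) T
  mapA : ∀ i, T (A i) = 0
  D_pos : ∀ i, 0 < D i
  D0 : 1 < D 0
  slope : ∀ i, ∀ x ∈ Ico (A i) (C i), D i * (x - A i) ≤ T x
  sumD : Summable fun i => 1 / D i

namespace PC

variable {T : ℝ → ℝ} {a₁ : ℝ} {A C D : ℕ → ℝ}

theorem chord (h : PC T a₁ A C D) (i : ℕ) {x y : ℝ} (hx : x ∈ Ico (A i) (C i))
    (hy : y ∈ Ico (A i) (C i)) (hxy : x ≤ y) : (y - A i) * T x ≤ (x - A i) * T y := by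
  rcases eq_or_lt_of_le (hx.1.trans hxy) with h0 | h0
  · have : x = A i := le_antisymm (by linarith) hx.1
    rw [this, ← h0]
  · have hA : A i ∈ Ico (A i) (C i) := ⟨le_rfl, h.A_lt i⟩
    have hp : 0 < y - A i := by linarith
    have := (h.conv i).2 hA hy
      (show 0 ≤ (y - x) / (y - A i) from div_nonneg (by linarith) hp.le)
      (show 0 ≤ (x - A i) / (y - A i) from div_nonneg (by linarith [hx.1]) hp.le)
      (by field_simp; ring)
    simp only [smul_eq_mul, h.mapA, mul_zero, zero_add] at this
    have e : (y - x) / (y - A i) * A i + (x - A i) / (y - A i) * y = x := by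
      field_simp; ring
    rw [e] at this
    calc (y - A i) * T x ≤ (y - A i) * ((x - A i) / (y - A i) * T y) := by gcongr
      _ = _ := by field_simp

theorem expand (h : PC T a₁ A C D) (i : ℕ) {x y : ℝ} (hx : x ∈ Ico (A i) (C i))
    (hy : y ∈ Ico (A i) (C i)) (hxy : x ≤ y) : D i * (y - x) ≤ T y - T x := by
  rcases eq_or_lt_of_le (hx.1.trans hxy) with h0 | h0
  · have : x = A i := le_antisymm (by linarith) hx.1
    rw [this, ← h0]; simp
  · have hp : 0 < y - A i := by linarith
    have h1 := h.chord i hx hy hxy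
    have h2 := h.slope i y hy
    refine le_of_mul_le_mul_left ?_ hp
    nlinarith [mul_le_mul_of_nonneg_left h2 (sub_nonneg.2 hxy)]

theorem monoT (h : PC T a₁ A C D) (i : ℕ) {x y : ℝ} (hx : x ∈ Ico (A i) (C i))
    (hy : y ∈ Ico (A i) (C i)) (hxy : x ≤ y) : T x ≤ T y := by
  have := h.expand i hx hy hxy
  nlinarith [mul_nonneg (h.D_pos i).le (sub_nonneg.2 hxy)]

theorem B_sub (h : PC T a₁ A C D) (i : ℕ) : Ico (A i) (C i) ⊆ Icc 0 1 :=
  fun _ hx => ⟨(h.A_nn i).trans hx.1, hx.2.le.trans (h.C_le i)⟩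

end PC

/-- generalised inverse of branch `i` -/
noncomputable def phi (T : ℝ → ℝ) (A C : ℕ → ℝ) (i : ℕ) (y : ℝ) : ℝ :=
  sSup {x | x ∈ Ico (A i) (C i) ∧ T x ≤ y}

namespace PC

variable {T : ℝ → ℝ} {a₁ : ℝ} {A C D : ℕ → ℝ}

theorem phi_bdd (i : ℕ) (y : ℝ) : BddAbove {x | x ∈ Ico (A i) (C i) ∧ T x ≤ y} :=
  ⟨C i, fun _ hx => hx.1.2.le⟩

theorem A_mem (h : PC T a₁ A C D) (i : ℕ) {y : ℝ} (hy : 0 ≤ y) :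
    A i ∈ {x | x ∈ Ico (A i) (C i) ∧ T x ≤ y} :=
  ⟨⟨le_rfl, h.A_lt i⟩, by rw [h.mapA]; exact hy⟩

theorem A_le_phi (h : PC T a₁ A C D) (i : ℕ) {y : ℝ} (hy : 0 ≤ y) : A i ≤ phi T A C i y :=
  le_csSup (phi_bdd i y) (h.A_mem i hy)

theorem phi_le_C (h : PC T a₁ A C D) (i : ℕ) {y : ℝ} (hy : 0 ≤ y) : phi T A C i y ≤ C i :=
  csSup_le ⟨_, h.A_mem i hy⟩ fun _ hx => hx.1.2.le

theorem phi_le (h : PC T a₁ A C D) (i : ℕ) {y : ℝ} (hy : 0 ≤ y) :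
    phi T A C i y ≤ A i + y * (1 / D i) := by
  refine csSup_le ⟨_, h.A_mem i hy⟩ fun x hx => ?_
  have h1 := h.slope i x hx.1
  have h2 := hx.2
  have := h.D_pos i
  have : x - A i ≤ y / D i := by rw [le_div_iff₀ this]; linarith
  rw [mul_one_div]; linarith

theorem phi_mem (h : PC T a₁ A C D) (i : ℕ) {y : ℝ} (hy : 0 ≤ y) :
    phi T A C i y ∈ Icc (0:ℝ) 1 :=
  ⟨(h.A_nn i).trans (h.A_le_phi i hy), (h.phi_le_C i hy).trans (h.C_le i)⟩

theorem phi_concave (h : PC T a₁ A C D) (i : ℕ) {y z p q : ℝ} (hy : 0 ≤ y) (hz : 0 ≤ z)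
    (hp : 0 ≤ p) (hq : 0 ≤ q) (hpq : p + q = 1) :
    p * phi T A C i y + q * phi T A C i z ≤ phi T A C i (p * y + q * z) := by
  have key : ∀ x ∈ {x | x ∈ Ico (A i) (C i) ∧ T x ≤ y},
      ∀ x' ∈ {x | x ∈ Ico (A i) (C i) ∧ T x ≤ z},
      p * x + q * x' ≤ phi T A C i (p * y + q * z) := by
    intro x hx x' hx'
    refine le_csSup (phi_bdd i _) ⟨(convex_Ico _ _) hx.1 hx'.1 hp hq hpq, ?_⟩
    refine ((h.conv i).2 hx.1 hx'.1 hp hq hpq).trans ?_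
    simp only [smul_eq_mul]
    have := mul_le_mul_of_nonneg_left hx.2 hp
    have := mul_le_mul_of_nonneg_left hx'.2 hq
    linarith
  have k2 : ∀ x' ∈ {x | x ∈ Ico (A i) (C i) ∧ T x ≤ z},
      p * phi T A C i y + q * x' ≤ phi T A C i (p * y + q * z) := by
    intro x' hx'
    rcases eq_or_lt_of_le hp with h0 | h0
    · have := key _ (h.A_mem i hy) x' hx'
      simpa [← h0] using this
    · have : phi T A C i y ≤ (phi T A C i (p * y + q * z) - q * x') / p := by
        refine csSup_le ⟨_, h.A_mem i hy⟩ fun x hx => ?_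
        rw [le_div_iff₀ h0]
        linarith [key x hx x' hx']
      rw [le_div_iff₀ h0] at this
      linarith
  rcases eq_or_lt_of_le hq with h0 | h0
  · have := k2 _ (h.A_mem i hz)
    simpa [← h0] using this
  · have : phi T A C i z ≤ (phi T A C i (p * y + q * z) - p * phi T A C i y) / q := by
      refine csSup_le ⟨_, h.A_mem i hz⟩ fun x hx => ?_
      rw [le_div_iff₀ h0]
      linarith [k2 x hx]
    rw [le_div_iff₀ h0] at this
    linarith

end PC

theorem lam_noatoms_countable {S : Set ℝ} (hS : S.Countable) : lam S = 0 :=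
  le_antisymm ((Measure.restrict_apply_le _ _).trans (hS.measure_zero _).le) zero_le

instance : IsProbabilityMeasure lam := ⟨by simp [lam]⟩

theorem lam_compl : lam (Icc (0:ℝ) 1)ᶜ = 0 := by
  simp [lam]

theorem cdf_diff {κ : Measure ℝ} [IsFiniteMeasure κ] (hκ : κ ≪ lam) {a b : ℝ} (hab : a ≤ b) :
    κ.real (Icc a b) = κ.real (Iic b) - κ.real (Iic a) := by
  have h0 : κ {a} = 0 := hκ (lam_noatoms_countable (countable_singleton a))
  have h1 : κ.real (Icc a b) = κ.real (Ioc a b) := by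
    apply le_antisymm
    · rw [← Ioc_insert_left hab, insert_eq]
      refine (measureReal_union_le _ _).trans ?_
      simp [measureReal_def, h0]
    · exact measureReal_mono Ioc_subset_Icc_self
  have h2 : Iic b \ Iic a = Ioc a b := by
    ext x; simp [and_comm]
  rw [h1, ← h2, measureReal_sdiff (Iic_subset_Iic.2 hab) measurableSet_Iic]

namespace PC

variable {T : ℝ → ℝ} {a₁ : ℝ} {A C D : ℕ → ℝ}

theorem branch_cdf (h : PC T a₁ A C D) {κ : Measure ℝ} [IsFiniteMeasure κ] (hκ : κ ≪ lam)
    (i : ℕ) {y : ℝ} (hy : 0 ≤ y) :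
    ((κ.restrict (Ico (A i) (C i))).map T).real (Iic y)
      = κ.real (Iic (phi T A C i y)) - κ.real (Iic (A i)) := by
  rw [← cdf_diff hκ (h.A_le_phi i hy), map_measureReal_apply h.meas measurableSet_Iic,
    measureReal_restrict_apply (h.meas measurableSet_Iic)]
  apply le_antisymm
  · refine measureReal_mono ?_
    rintro x ⟨hx, hx'⟩
    exact ⟨hx'.1, le_csSup (phi_bdd i y) ⟨hx', hx⟩⟩
  · have h0 : κ {phi T A C i y} = 0 := hκ (lam_noatoms_countable (countable_singleton _))
    have : Icc (A i) (phi T A C i y) ⊆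
        (T ⁻¹' Iic y ∩ Ico (A i) (C i)) ∪ {phi T A C i y} := by
      rintro x ⟨hx, hx'⟩
      rcases eq_or_lt_of_le hx' with e | e
      · right; exact e
      · left
        obtain ⟨z, hz, hxz⟩ := exists_lt_of_lt_csSup ⟨_, h.A_mem i hy⟩ e
        have hxB : x ∈ Ico (A i) (C i) := ⟨hx, hxz.trans hz.1.2⟩
        exact ⟨(h.monoT i hxB hz.1 hxz.le).trans hz.2, hxB⟩
    refine (measureReal_mono this).trans ((measureReal_union_le _ _).trans ?_)
    simp [measureReal_def, h0]

theorem lipInv (h : PC T a₁ A C D) (i : ℕ) {x y : ℝ} (hx : x ∈ Ico (A i) (C i))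
    (hy : y ∈ Ico (A i) (C i)) : D i * |x - y| ≤ |T x - T y| := by
  rcases le_total x y with hxy | hxy
  · have := h.expand i hx hy hxy
    rw [abs_sub_comm x y, abs_sub_comm (T x), abs_of_nonneg (sub_nonneg.2 hxy)]
    exact this.trans (le_abs_self _)
  · have := h.expand i hy hx hxy
    rw [abs_of_nonneg (sub_nonneg.2 hxy)]
    exact this.trans (le_abs_self _)

theorem injOn (h : PC T a₁ A C D) (i : ℕ) : InjOn T (Ico (A i) (C i)) := by
  intro x hx y hy e
  have := h.lipInv i hx hy
  rw [e, sub_self, abs_zero] at this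
  have h2 := h.D_pos i
  have : |x - y| ≤ 0 := by
    by_contra hc
    push Not at hc
    nlinarith [mul_pos h2 hc]
  exact sub_eq_zero.1 (abs_eq_zero.1 (le_antisymm this (abs_nonneg _)))

theorem nonsing (h : PC T a₁ A C D) {S : Set ℝ} (hS : volume S = 0)
    (i : ℕ) : volume (Ico (A i) (C i) ∩ T ⁻¹' S) = 0 := by
  set W := Ico (A i) (C i) ∩ T ⁻¹' S
  have hinj : InjOn T W := (h.injOn i).mono inter_subset_left
  have himg : Function.invFunOn T W '' (T '' W) = W := by
    exact hinj.invFunOn_image subset_rfl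
  have hL : LipschitzOnWith (Real.toNNReal (1 / D i)) (Function.invFunOn T W) (T '' W) := by
    refine LipschitzOnWith.of_dist_le_mul ?_
    rintro _ ⟨x, hx, rfl⟩ _ ⟨y, hy, rfl⟩
    rw [hinj.leftInvOn_invFunOn hx, hinj.leftInvOn_invFunOn hy, Real.dist_eq, Real.dist_eq,
      Real.coe_toNNReal _ (by have := h.D_pos i; positivity)]
    have := h.lipInv i hx.1 hy.1
    have h2 := h.D_pos i
    rw [one_div, ← div_eq_inv_mul, le_div_iff₀ h2]; linarith
  have := hL.hausdorffMeasure_image_le (d := 1) zero_le_one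
  rw [himg, hausdorffMeasure_real] at this
  have h0 : volume (T '' W) = 0 :=
    measure_mono_null (by rintro _ ⟨x, hx, rfl⟩; exact hx.2) hS
  rw [h0, mul_zero] at this
  exact le_antisymm this zero_le

theorem cover_null (h : PC T a₁ A C D) : lam (⋃ i, Ico (A i) (C i))ᶜ = 0 := by
  refine measure_mono_null (t := (Icc 0 1)ᶜ ∪ (Icc (0:ℝ) 1 \ ⋃ i, Ico (A i) (C i))) ?_
    (measure_union_null lam_compl (lam_noatoms_countable h.cover))
  intro x hx
  by_cases hx1 : x ∈ Icc (0:ℝ) 1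
  · right; exact ⟨hx1, hx⟩
  · left; exact hx1

theorem map_ac (h : PC T a₁ A C D) {κ : Measure ℝ} (hκ : κ ≪ lam) : κ.map T ≪ lam := by
  have key : ∀ S, MeasurableSet S → volume (S ∩ Icc 0 1) = 0 → lam (T ⁻¹' S) = 0 := by
    intro S hS h0
    refine measure_mono_null (t := (⋃ i, Ico (A i) (C i))ᶜ ∪ ⋃ i, Ico (A i) (C i) ∩ T ⁻¹' (S ∩ Icc 0 1)) ?_
      (measure_union_null h.cover_null (measure_iUnion_null fun i => ?_))
    · intro x hx
      by_cases hx1 : x ∈ ⋃ i, Ico (A i) (C i)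
      · right
        obtain ⟨i, hi⟩ := mem_iUnion.1 hx1
        exact mem_iUnion.2 ⟨i, hi, hx, h.maps x⟩
      · left; exact hx1
    · exact le_antisymm ((Measure.restrict_apply_le _ _).trans (h.nonsing h0 i).le) zero_le
  refine Measure.AbsolutelyContinuous.mk fun S hS h0 => ?_
  rw [Measure.map_apply h.meas hS]
  apply hκ
  apply key S hS
  rwa [lam, Measure.restrict_apply hS] at h0

end PC

/-- finite a.c. measure with concave distribution function -/
structure Good (κ : Measure ℝ) : Prop where
  fin : IsFiniteMeasure κ
  ac : κ ≪ lam
  conc : ConcaveOn ℝ (Icc 0 1) (fun y => κ.real (Iic y))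

theorem hasSum_real {κ : ℕ → Measure ℝ} [IsFiniteMeasure (Measure.sum κ)] {S : Set ℝ}
    (hS : MeasurableSet S) : HasSum (fun i => (κ i).real S) ((Measure.sum κ).real S) := by
  have h1 : (Measure.sum κ) S = ∑' i, κ i S := Measure.sum_apply _ hS
  have h2 : ∑' i, κ i S ≠ ⊤ := by rw [← h1]; exact measure_ne_top _ _
  simp only [measureReal_def]
  rw [h1]
  rw [ENNReal.tsum_toReal_eq fun i => ENNReal.ne_top_of_tsum_ne_top h2 i]
  exact ENNReal.hasSum_toReal h2

theorem good_sum {κ : ℕ → Measure ℝ} (hf : IsFiniteMeasure (Measure.sum κ))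
    (h : ∀ i, Good (κ i)) : Good (Measure.sum κ) := by
  refine ⟨hf, ?_, convex_Icc _ _, ?_⟩
  · refine Measure.AbsolutelyContinuous.mk fun S hS h0 => ?_
    rw [Measure.sum_apply _ hS]
    simp [fun i => (h i).ac h0]
  · intro x hx y hy p q hp hq hpq
    simp only [smul_eq_mul]
    refine hasSum_le (fun i => ?_)
      (((hasSum_real (κ := κ) measurableSet_Iic).mul_left p).add
      ((hasSum_real (κ := κ) measurableSet_Iic).mul_left q)) (hasSum_real measurableSet_Iic)
    exact (h i).conc.2 hx hy hp hq hpq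

theorem good_smul {κ : Measure ℝ} (h : Good κ) {c : ENNReal} (hc : c ≠ ⊤) : Good (c • κ) := by
  have := h.fin
  refine ⟨Measure.smul_finite κ hc, Measure.smul_absolutelyContinuous.trans h.ac, ?_⟩
  simp only [measureReal_ennreal_smul_apply]
  exact h.conc.smul ENNReal.toReal_nonneg

theorem lam_cdf {y : ℝ} (hy : y ∈ Icc (0:ℝ) 1) : lam.real (Iic y) = y := by
  rw [lam, measureReal_restrict_apply measurableSet_Iic]
  have : Iic y ∩ Icc 0 1 = Icc 0 y := by
    ext x; simp only [mem_inter_iff, mem_Iic, mem_Icc]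
    constructor
    · rintro ⟨h1, h2, h3⟩; exact ⟨h2, h1⟩
    · rintro ⟨h1, h2⟩; exact ⟨h2, h1, h2.trans hy.2⟩
  rw [this]; simp [hy.1]

theorem good_lam : Good lam := by
  refine ⟨inferInstance, Measure.AbsolutelyContinuous.rfl, convex_Icc _ _, ?_⟩
  intro x hx y hy p q hp hq hpq
  simp only
  rw [lam_cdf hx, lam_cdf hy, lam_cdf ((convex_Icc (0:ℝ) 1) hx hy hp hq hpq)]

theorem cdf_neg {κ : Measure ℝ} (hκ : κ ≪ lam) {y : ℝ} (hy : y ≤ 0) : κ (Iic y) = 0 := by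
  apply hκ
  rw [lam, Measure.restrict_apply measurableSet_Iic]
  refine measure_mono_null (t := {0}) ?_ (by simp)
  rintro x ⟨h1, h2⟩
  exact le_antisymm (h1.trans hy) h2.1

theorem ext01 {κ₁ κ₂ : Measure ℝ} [IsFiniteMeasure κ₁] [IsFiniteMeasure κ₂] (h₁ : κ₁ ≪ lam)
    (h₂ : κ₂ ≪ lam) (h : ∀ y ∈ Icc (0:ℝ) 1, κ₁.real (Iic y) = κ₂.real (Iic y)) : κ₁ = κ₂ := by
  refine Measure.ext_of_Iic _ _ fun y => ?_
  have key : ∀ y ∈ Icc (0:ℝ) 1, κ₁ (Iic y) = κ₂ (Iic y) := fun y hy =>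
    (measureReal_eq_measureReal_iff).1 (h y hy)
  rcases le_total y 0 with h0 | h0
  · rw [cdf_neg h₁ h0, cdf_neg h₂ h0]
  rcases le_total y 1 with h1 | h1
  · exact key y ⟨h0, h1⟩
  · have e : ∀ κ : Measure ℝ, κ ≪ lam → κ (Iic y) = κ (Iic 1) := by
      intro κ hκ
      apply le_antisymm _ (measure_mono (Iic_subset_Iic.2 h1))
      have : Iic y ⊆ Iic 1 ∪ (Icc (0:ℝ) 1)ᶜ := by
        intro x _
        by_cases hx : x ≤ 1
        · left; exact hx
        · right; intro hx'; exact hx hx'.2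
      refine (measure_mono this).trans ((measure_union_le _ _).trans ?_)
      rw [hκ lam_compl, add_zero]
    rw [e _ h₁, e _ h₂]
    exact key 1 (by simp)

namespace PC

variable {T : ℝ → ℝ} {a₁ : ℝ} {A C D : ℕ → ℝ}

theorem good_branch (h : PC T a₁ A C D) {κ : Measure ℝ} (hκ : Good κ) (i : ℕ) :
    Good ((κ.restrict (Ico (A i) (C i))).map T) := by
  have := hκ.fin
  refine ⟨inferInstance, h.map_ac (Measure.absolutelyContinuous_of_le Measure.restrict_le_self |>.trans hκ.ac), convex_Icc _ _, ?_⟩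
  intro x hx y hy p q hp hq hpq
  have hz := (convex_Icc (0:ℝ) 1) hx hy hp hq hpq
  simp only
  rw [h.branch_cdf hκ.ac i hx.1, h.branch_cdf hκ.ac i hy.1, h.branch_cdf hκ.ac i hz.1]
  have h1 := hκ.conc.2 (h.phi_mem i hx.1) (h.phi_mem i hy.1) hp hq hpq
  have h2 := h.phi_concave i hx.1 hy.1 hp hq hpq
  have h3 : κ.real (Iic (p • phi T A C i x + q • phi T A C i y)) ≤
      κ.real (Iic (phi T A C i (p • x + q • y))) := measureReal_mono (Iic_subset_Iic.2 h2)
  simp only [smul_eq_mul] at *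
  have : κ.real (Iic (A i)) = p * κ.real (Iic (A i)) + q * κ.real (Iic (A i)) := by
    rw [← add_mul, hpq, one_mul]
  linarith

theorem decomp (h : PC T a₁ A C D) {κ : Measure ℝ} (hκ : κ ≪ lam) :
    Measure.sum (fun i => κ.restrict (Ico (A i) (C i))) = κ := by
  rw [← Measure.restrict_iUnion h.disj fun i => measurableSet_Ico]
  exact Measure.restrict_eq_self_of_ae_mem (by
    have := hκ h.cover_null
    rwa [ae_iff])

theorem map_decomp (h : PC T a₁ A C D) {κ : Measure ℝ} (hκ : κ ≪ lam) :
    Measure.sum (fun i => (κ.restrict (Ico (A i) (C i))).map T) = κ.map T := by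
  conv_rhs => rw [← h.decomp hκ]
  rw [Measure.map_sum h.meas.aemeasurable]

theorem good_map (h : PC T a₁ A C D) {κ : Measure ℝ} (hκ : Good κ) : Good (κ.map T) := by
  have := hκ.fin
  rw [← h.map_decomp hκ.ac]
  exact good_sum (by rw [h.map_decomp hκ.ac]; infer_instance) (h.good_branch hκ)

theorem hasSum_cdf (h : PC T a₁ A C D) {κ : Measure ℝ} [IsFiniteMeasure κ] (hκ : κ ≪ lam)
    {y : ℝ} (hy : 0 ≤ y) :
    HasSum (fun i => κ.real (Iic (phi T A C i y)) - κ.real (Iic (A i))) ((κ.map T).real (Iic y)) := by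
  have : IsFiniteMeasure (Measure.sum (fun i => (κ.restrict (Ico (A i) (C i))).map T)) := by
    rw [h.map_decomp hκ]; infer_instance
  have := hasSum_real (κ := fun i => (κ.restrict (Ico (A i) (C i))).map T) (S := Iic y)
    measurableSet_Iic
  rw [h.map_decomp hκ] at this
  simpa only [h.branch_cdf hκ _ hy] using this

end PC

/-- density of a concave distribution function -/
theorem dens {G : ℝ → ℝ} (hc : ConcaveOn ℝ (Icc 0 1) G) (hcont : ContinuousOn G (Icc 0 1))
    (hm : MonotoneOn G (Icc 0 1)) (h0 : G 0 = 0) :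
    ∃ f : ℝ → ℝ, AntitoneOn f (Ioo 0 1) ∧ (∀ x ∈ Ioo (0:ℝ) 1, 0 ≤ f x) ∧
      IntegrableOn f (Ioc 0 1) ∧ (∀ y ∈ Icc (0:ℝ) 1, ∫ x in (0:ℝ)..y, f x = G y) ∧
      (∀ x ∈ Ioo (0:ℝ) 1, f x * x ≤ G x) := by
  have hn := hc.neg
  have hmemint : ∀ x ∈ Ioo (0:ℝ) 1, x ∈ interior (Icc (0:ℝ) 1) := fun x hx => by
    rwa [interior_Icc]
  have hd : ∀ x ∈ Ioo (0:ℝ) 1, HasDerivWithinAt G (-(derivWithin (-G) (Ioi x) x)) (Ioi x) x := by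
    intro x hx
    have := (hn.hasDerivWithinAt_rightDeriv_of_mem_interior (hmemint x hx)).neg
    simpa using this
  have hsub : Ioo (0:ℝ) 1 ⊆ Icc 0 1 := Ioo_subset_Icc_self
  have hpos : ∀ x ∈ Ioo (0:ℝ) 1, 0 ≤ -(derivWithin (-G) (Ioi x) x) := by
    intro x hx
    have := hn.rightDeriv_le_slope_of_mem_interior (hmemint x hx) (y := 1) (by simp) hx.2
    have h2 : slope (-G) x 1 ≤ 0 := by
      rw [slope_def_field]
      apply div_nonpos_of_nonpos_of_nonneg
      · have := hm (hsub hx) (show (1:ℝ) ∈ Icc (0:ℝ) 1 by simp) hx.2.le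
        simp only [Pi.neg_apply]; linarith
      · linarith [hx.2]
    linarith
  have hInt : IntegrableOn (fun x => -(derivWithin (-G) (Ioi x) x)) (Ioc 0 1) :=
    intervalIntegral.integrableOn_deriv_right_of_nonneg hcont hd hpos
  refine ⟨fun x => -(derivWithin (-G) (Ioi x) x), ?_, hpos, hInt, ?_, ?_⟩
  · intro x hx y hy hxy
    have := hn.monotoneOn_rightDeriv (hmemint x hx) (hmemint y hy) hxy
    simpa using this
  · intro y hy
    rw [intervalIntegral.integral_eq_sub_of_hasDeriv_right_of_le hy.1
      (hcont.mono (Icc_subset_Icc_right hy.2))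
      (fun x hx => hd x ⟨hx.1, hx.2.trans_le hy.2⟩), h0, sub_zero]
    rw [intervalIntegrable_iff_integrableOn_Ioc_of_le hy.1]
    exact hInt.mono_set (Ioc_subset_Ioc_right hy.2)
  · intro x hx
    have h1 : ∀ z ∈ Ioo x 1, (G z - G x) / (z - x) ≤ G x / x := by
      intro z hz
      have := hc.slope_anti_adjacent (x := 0) (y := x) (z := z) (by simp)
        ⟨hx.1.le.trans hz.1.le, hz.2.le⟩ hx.1 hz.1
      simpa [h0] using this
    have h2 := (hasDerivWithinAt_iff_tendsto_slope' (by simp)).1 (hd x hx)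
    have h3 : -(derivWithin (-G) (Ioi x) x) ≤ G x / x := by
      refine le_of_tendsto h2 ?_
      filter_upwards [Ioo_mem_nhdsGT hx.2] with z hz
      rw [slope_def_field]; exact h1 z hz
    rwa [le_div_iff₀ hx.1] at h3

theorem lam_eq : lam = volume.restrict (Ioc 0 1) := by
  rw [lam]; exact (restrict_Ioc_eq_restrict_Icc).symm

theorem withDensity_cdf {f G : ℝ → ℝ} (hf : IntegrableOn f (Ioc 0 1))
    (hpos : ∀ x ∈ Ioo (0:ℝ) 1, 0 ≤ f x) (hG : ∀ y ∈ Icc (0:ℝ) 1, ∫ x in (0:ℝ)..y, f x = G y)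
    {y : ℝ} (hy : y ∈ Icc (0:ℝ) 1) :
    (lam.withDensity (fun x => ENNReal.ofReal (f x))).real (Iic y) = G y := by
  rw [← hG y hy, measureReal_def, withDensity_apply _ measurableSet_Iic, lam_eq,
    Measure.restrict_restrict measurableSet_Iic, intervalIntegral.integral_of_le hy.1]
  have : Iic y ∩ Ioc 0 1 = Ioc 0 y := by
    ext x; simp only [mem_inter_iff, mem_Iic, mem_Ioc]
    constructor
    · rintro ⟨h1, h2, h3⟩; exact ⟨h2, h1⟩
    · rintro ⟨h1, h2⟩; exact ⟨h2, h1, h2.trans hy.2⟩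
  rw [this, integral_eq_lintegral_of_nonneg_ae]
  · rw [← restrict_Ioo_eq_restrict_Ioc]
    filter_upwards [ae_restrict_mem measurableSet_Ioo] with x hx
    exact hpos x ⟨hx.1, hx.2.trans_le hy.2⟩
  · exact (hf.mono_set (Ioc_subset_Ioc_right hy.2)).aestronglyMeasurable

theorem cdf_cont {κ : Measure ℝ} [IsFiniteMeasure κ] (hκ : κ ≪ lam) :
    ContinuousOn (fun y => κ.real (Iic y)) (Icc 0 1) := by
  have : NullSingletonClass κ :=
    ⟨fun x => hκ (lam_noatoms_countable (countable_singleton x))⟩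
  have h1 : Continuous fun y => ∫ _ in (0:ℝ)..y, (1:ℝ) ∂κ :=
    intervalIntegral.continuous_primitive (fun a b => by simp) 0
  refine h1.continuousOn.congr fun y hy => ?_
  have h2 := cdf_diff hκ hy.1
  have h3 : κ.real (Iic 0) = 0 := by simp [measureReal_def, cdf_neg hκ le_rfl]
  simp only
  rw [h3, sub_zero] at h2
  rw [← h2, intervalIntegral.integral_const', Ioc_eq_empty_of_le hy.1]
  simp [measureReal_def, Ioc_ae_eq_Icc.measure_eq]

/-- an invariant good measure charges a full neighbourhood of `0` -/
theorem good_charges {κ : Measure ℝ} (h : Good κ) (h0 : κ ≠ 0) :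
    ∃ δ, 0 < δ ∧ δ ≤ 1 ∧ ∀ S, MeasurableSet S → κ S = 0 → volume (S ∩ Ioo 0 δ) = 0 := by
  have := h.fin
  obtain ⟨f, fa, fp, fi, fG, -⟩ := dens h.conc (cdf_cont h.ac)
    (fun x _ y _ hxy => measureReal_mono (Iic_subset_Iic.2 hxy))
    (by simp [measureReal_def, cdf_neg h.ac le_rfl])
  have hfin : IsFiniteMeasure (lam.withDensity fun x => ENNReal.ofReal (f x)) :=
    isFiniteMeasure_withDensity_ofReal (by rw [lam_eq]; exact fi.2)
  have e : κ = lam.withDensity (fun x => ENNReal.ofReal (f x)) :=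
    ext01 h.ac (withDensity_absolutelyContinuous _ _) fun y hy =>
      (withDensity_cdf fi fp fG hy).symm
  have hex : ∃ δ ∈ Ioo (0:ℝ) 1, 0 < f δ := by
    by_contra hc
    push Not at hc
    apply h0
    rw [e]
    have : (fun x => ENNReal.ofReal (f x)) =ᵐ[lam] 0 := by
      rw [lam_eq, ← restrict_Ioo_eq_restrict_Ioc]
      filter_upwards [ae_restrict_mem measurableSet_Ioo] with x hx
      simpa using hc x hx
    rw [withDensity_congr_ae this, withDensity_zero]
  obtain ⟨δ, hδ, hfδ⟩ := hex
  refine ⟨δ, hδ.1, hδ.2.le, fun S hS hS0 => ?_⟩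
  rw [e, withDensity_apply _ hS, lam_eq, Measure.restrict_restrict hS] at hS0
  have hle : ∫⁻ _ in S ∩ Ioo 0 δ, ENNReal.ofReal (f δ) ≤
      ∫⁻ x in S ∩ Ioc 0 1, ENNReal.ofReal (f x) := by
    refine le_trans (setLIntegral_mono_ae' (hS.inter measurableSet_Ioo) ?_)
      (lintegral_mono_set (inter_subset_inter_right S
        (Ioo_subset_Ioc_self.trans (Ioc_subset_Ioc_right hδ.2.le))))
    · refine Eventually.of_forall fun x hx => ENNReal.ofReal_le_ofReal ?_
      exact fa ⟨hx.2.1, hx.2.2.trans hδ.2⟩ hδ hx.2.2.le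
  rw [hS0, setLIntegral_const, nonpos_iff_eq_zero, mul_eq_zero] at hle
  rcases hle with h1 | h1
  · simp at h1; linarith
  · exact h1


/-- admissible distribution functions -/
structure Adm (M : ℝ) (F : ℝ → ℝ) : Prop where
  conc : ConcaveOn ℝ (Icc 0 1) F
  mono : MonotoneOn F (Icc 0 1)
  zero : F 0 = 0
  one : F 1 = 1
  le : ∀ y ∈ Icc (0:ℝ) 1, F y ≤ M * y

theorem Adm.bd {M : ℝ} {F : ℝ → ℝ} (h : Adm M F) {y : ℝ} (hy : y ∈ Icc (0:ℝ) 1) :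
    F y ∈ Icc (0:ℝ) 1 := by
  constructor
  · rw [← h.zero]; exact h.mono (by simp) hy hy.1
  · rw [← h.one]; exact h.mono hy (by simp) hy.2

/-- coefficients in the Lasota–Yorke type bound -/
noncomputable def bcoef (a₁ M : ℝ) (D : ℕ → ℝ) (i : ℕ) : ℝ :=
  (if i = 0 then M else 1 / a₁) * (1 / D i)

namespace PC

variable {T : ℝ → ℝ} {a₁ : ℝ} {A C D : ℕ → ℝ}

theorem exists_M (h : PC T a₁ A C D) :
    ∃ M s : ℝ, 1 ≤ M ∧ s ≤ M ∧ HasSum (bcoef a₁ M D) s := by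
  have hs : Summable fun i => 1 / D (i + 1) := (summable_nat_add_iff 1).2 h.sumD
  obtain ⟨S, hS⟩ := hs
  have hD := h.D0
  have hp : 0 < 1 - 1 / D 0 := by
    rw [sub_pos, div_lt_one (by linarith)]; exact hD
  refine ⟨max 1 (1 / a₁ * S / (1 - 1 / D 0)), 1 / a₁ * S + max 1 (1 / a₁ * S / (1 - 1 / D 0)) * (1 / D 0),
    le_max_left _ _, ?_, ?_⟩
  · have := le_max_right 1 (1 / a₁ * S / (1 - 1 / D 0))
    set M := max 1 (1 / a₁ * S / (1 - 1 / D 0))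
    rw [div_le_iff₀ hp] at this
    linarith
  · rw [← hasSum_nat_add_iff' 1]
    have := hS.mul_left (1 / a₁)
    simpa [bcoef] using this

theorem term_bound (h : PC T a₁ A C D) {M : ℝ} {F : ℝ → ℝ} (hF : Adm M F) (hM : 1 ≤ M)
    {y : ℝ} (hy : y ∈ Icc (0:ℝ) 1) (i : ℕ) :
    F (phi T A C i y) - F (A i) ∈ Icc 0 (bcoef a₁ M D i * y) := by
  have hφ := h.phi_mem i hy.1 (C := C)
  have hA : A i ∈ Icc (0:ℝ) 1 := ⟨h.A_nn i, ((h.A_lt i).trans_le (h.C_le i)).le⟩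
  have hle := h.A_le_phi i hy.1
  have hub := h.phi_le i hy.1
  refine ⟨sub_nonneg.2 (hF.mono hA hφ hle), ?_⟩
  by_cases h0 : i = 0
  · subst h0
    rw [h.A0, hF.zero, sub_zero, bcoef, if_pos rfl]
    rw [h.A0, zero_add] at hub
    refine (hF.le _ hφ).trans ?_
    nlinarith
  · have ha := h.A_ge i h0
    have hap := h.a_pos
    have hAp : 0 < A i := hap.trans_le ha
    rw [bcoef, if_neg h0]
    have hD := h.D_pos i
    have hRD : 0 ≤ y * (1 / D i) := mul_nonneg hy.1 (by positivity)
    rcases eq_or_lt_of_le hle with e | e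
    · rw [← e, sub_self]
      have : 0 < 1 / a₁ := by positivity
      nlinarith
    · have h1 := hF.conc.slope_anti_adjacent (x := 0) (by simp) hφ hAp e
      rw [hF.zero, sub_zero, sub_zero] at h1
      have h2 : F (A i) / A i ≤ 1 / a₁ := by
        have := (hF.bd hA).2
        gcongr
      rw [div_le_iff₀ (by linarith)] at h1
      have h3 := (hF.bd hA).1
      calc F (phi T A C i y) - F (A i) ≤ F (A i) / A i * (phi T A C i y - A i) := h1
        _ ≤ 1 / a₁ * (y * (1 / D i)) := by
          apply mul_le_mul h2 (by linarith) (by linarith) (by positivity)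
        _ = _ := by ring

theorem adm_map (h : PC T a₁ A C D) {κ : Measure ℝ} (hκ : Good κ) {M s : ℝ} (hM : 1 ≤ M)
    (hs : s ≤ M) (hb : HasSum (bcoef a₁ M D) s) (hF : Adm M fun y => κ.real (Iic y)) :
    Adm M fun y => (κ.map T).real (Iic y) := by
  have := hκ.fin
  have hg := h.good_map hκ
  refine ⟨hg.conc, fun x _ y _ hxy => measureReal_mono (Iic_subset_Iic.2 hxy), ?_, ?_, ?_⟩
  · simp [measureReal_def, cdf_neg hg.ac le_rfl]
  · have h1 : (κ.map T).real (Iic 1) = κ.real (Iic 1) := by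
      rw [map_measureReal_apply h.meas measurableSet_Iic]
      have : T ⁻¹' Iic 1 = univ := by
        ext x; simpa using (h.maps x).2
      rw [this]
      apply le_antisymm _ (measureReal_mono (subset_univ _))
      have : (univ : Set ℝ) ⊆ Iic 1 ∪ (Icc (0:ℝ) 1)ᶜ := by
        intro x _
        by_cases hx : x ≤ 1
        · left; exact hx
        · right; intro hx'; exact hx hx'.2
      refine (measureReal_mono this).trans ((measureReal_union_le _ _).trans ?_)
      simp [measureReal_def, hκ.ac lam_compl]
    rw [h1]; exact hF.one
  · intro y hy
    refine (hasSum_le (fun i => (h.term_bound hF hM hy i).2) (h.hasSum_cdf hκ.ac hy.1)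
      (hb.mul_right y)).trans ?_
    exact mul_le_mul_of_nonneg_right hs hy.1

theorem adm_avg {M : ℝ} {F : ℕ → ℝ → ℝ} (hF : ∀ n, Adm M (F n)) (N : ℕ) :
    Adm M (fun y => (∑ n ∈ Finset.range (N + 1), F n y) / (N + 1)) := by
  have hN : (0:ℝ) < N + 1 := by positivity
  refine ⟨⟨convex_Icc _ _, ?_⟩, ?_, ?_, ?_, ?_⟩
  · intro x hx y hy p q hp hq hpq
    simp only [smul_eq_mul]
    rw [← mul_div_assoc, ← mul_div_assoc, ← add_div, Finset.mul_sum, Finset.mul_sum,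
      ← Finset.sum_add_distrib]
    gcongr with n hn
    exact (hF n).conc.2 hx hy hp hq hpq
  · intro x hx y hy hxy
    simp only
    gcongr with n hn
    exact (hF n).mono hx hy hxy
  · simp [fun n => (hF n).zero]
  · simp only [fun n => (hF n).one]
    simp [hN.ne']
  · intro y hy
    rw [div_le_iff₀ hN]
    calc ∑ n ∈ Finset.range (N + 1), F n y ≤ ∑ n ∈ Finset.range (N + 1), M * y :=
          Finset.sum_le_sum fun n _ => (hF n).le y hy
      _ = _ := by simp; ring

theorem adm_lim {M : ℝ} {F : ℕ → ℝ → ℝ} (hF : ∀ n, Adm M (F n)) {U : Filter ℕ} [U.NeBot]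
    {G : ℝ → ℝ} (hG : ∀ y ∈ Icc (0:ℝ) 1, Tendsto (fun n => F n y) U (nhds (G y))) :
    Adm M G := by
  refine ⟨⟨convex_Icc _ _, ?_⟩, ?_, ?_, ?_, ?_⟩
  · intro x hx y hy p q hp hq hpq
    refine le_of_tendsto_of_tendsto' (((hG x hx).const_mul p).add ((hG y hy).const_mul q))
      (hG _ ((convex_Icc (0:ℝ) 1) hx hy hp hq hpq)) fun n => ?_
    exact (hF n).conc.2 hx hy hp hq hpq
  · intro x hx y hy hxy
    exact le_of_tendsto_of_tendsto' (hG x hx) (hG y hy) fun n => (hF n).mono hx hy hxy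
  · refine tendsto_nhds_unique (hG 0 (by simp)) ?_
    simp [fun n => (hF n).zero]
  · refine tendsto_nhds_unique (hG 1 (by simp)) ?_
    simp [fun n => (hF n).one]
  · intro y hy
    exact le_of_tendsto' (hG y hy) fun n => (hF n).le y hy

theorem exists_G (h : PC T a₁ A C D) : ∃ (M : ℝ) (G : ℝ → ℝ), Adm M G ∧
    ∀ y ∈ Icc (0:ℝ) 1, HasSum (fun i => G (phi T A C i y) - G (A i)) (G y) := by
  obtain ⟨M, s, hM, hs, hb⟩ := h.exists_M
  let m : ℕ → Measure ℝ := fun n => (fun κ : Measure ℝ => κ.map T)^[n] lam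
  have hms : ∀ n, m (n + 1) = (m n).map T := fun n => Function.iterate_succ_apply' _ _ _
  have hgood : ∀ n, Good (m n) := by
    intro n
    induction n with
    | zero => exact good_lam
    | succ n ih => rw [hms]; exact h.good_map ih
  have hadm : ∀ n, Adm M fun y => (m n).real (Iic y) := by
    intro n
    induction n with
    | zero =>
      refine ⟨good_lam.conc, fun x _ y _ hxy => measureReal_mono (μ := lam) (Iic_subset_Iic.2 hxy),
        lam_cdf (by simp), lam_cdf (by simp), fun y hy => ?_⟩
      change lam.real (Iic y) ≤ _
      rw [lam_cdf hy]; nlinarith [hy.1]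
    | succ n ih => simp only [hms]; exact h.adm_map (hgood n) hM hs hb ih
  let F : ℕ → ℝ → ℝ := fun n y => (m n).real (Iic y)
  have hA := adm_avg hadm
  let U : Ultrafilter ℕ := hyperfilter ℕ
  have hU : (U : Filter ℕ) ≤ atTop := by
    rw [← Nat.cofinite_eq_atTop]; exact hyperfilter_le_cofinite
  have hlim : ∀ y : ℝ, ∃ g : ℝ, y ∈ Icc (0:ℝ) 1 →
      Tendsto (fun N : ℕ => (∑ n ∈ Finset.range (N + 1), F n y) / (N + 1)) U (nhds g) := by
    intro y
    by_cases hy : y ∈ Icc (0:ℝ) 1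
    · obtain ⟨g, -, hg⟩ := (isCompact_Icc (a := (0:ℝ)) (b := 1)).ultrafilter_le_nhds
        (U.map fun N : ℕ => (∑ n ∈ Finset.range (N + 1), F n y) / (N + 1)) (by
          simp only [Ultrafilter.coe_map, le_principal_iff, mem_map]
          exact Filter.univ_mem' fun N => (hA N).bd hy)
      exact ⟨g, fun _ => hg⟩
    · exact ⟨0, fun h => absurd h hy⟩
  choose G hG using hlim
  have hAG : Adm M G := adm_lim hA hG
  refine ⟨M, G, hAG, fun y hy => ?_⟩
  have hφ := fun i => h.phi_mem i hy.1 (C := C)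
  have hAi : ∀ i, A i ∈ Icc (0:ℝ) 1 := fun i =>
    ⟨h.A_nn i, ((h.A_lt i).trans_le (h.C_le i)).le⟩
  have hbound : Summable fun i => bcoef a₁ M D i * y := hb.summable.mul_right y
  have hsumm : Summable (fun i => G (phi T A C i y) - G (A i)) :=
    Summable.of_nonneg_of_le (fun i => (h.term_bound hAG hM hy i).1)
      (fun i => (h.term_bound hAG hM hy i).2) hbound
  rw [hsumm.hasSum_iff]
  have hsumN : ∀ N : ℕ, HasSum (fun i =>
      (∑ n ∈ Finset.range (N + 1), F n (phi T A C i y)) / (N + 1) -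
      (∑ n ∈ Finset.range (N + 1), F n (A i)) / (N + 1))
      ((∑ n ∈ Finset.range (N + 1), F (n + 1) y) / (N + 1)) := by
    intro N
    have : ∀ n ∈ Finset.range (N + 1), HasSum
        (fun i => F n (phi T A C i y) - F n (A i)) (F (n + 1) y) := by
      intro n _
      have := (hgood n).fin
      have := h.hasSum_cdf (hgood n).ac hy.1
      rw [← hms] at this
      exact this
    have := (hasSum_sum this).div_const ((N:ℝ) + 1)
    simp only [Finset.sum_sub_distrib, sub_div] at this
    exact this
  have hdom : Tendsto (fun N : ℕ => ∑' i, ((∑ n ∈ Finset.range (N + 1), F n (phi T A C i y)) / ((N:ℝ) + 1) -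
      (∑ n ∈ Finset.range (N + 1), F n (A i)) / ((N:ℝ) + 1))) U
      (nhds (∑' i, (G (phi T A C i y) - G (A i)))) := by
    refine tendsto_tsum_of_dominated_convergence hbound
      (fun i => (hG _ (hφ i)).sub (hG _ (hAi i))) (Eventually.of_forall fun N i => ?_)
    have := h.term_bound (hA N) hM hy i
    rw [Real.norm_of_nonneg this.1]
    exact this.2
  refine tendsto_nhds_unique hdom ?_
  simp only [fun N => (hsumN N).tsum_eq]
  have hdiff : Tendsto (fun N : ℕ => (F (N + 1) y - F 0 y) / ((N:ℝ) + 1)) U (nhds 0) := by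
    refine Tendsto.mono_left ?_ hU
    refine squeeze_zero_norm (a := fun N : ℕ => 1 / ((N:ℝ) + 1)) (fun N => ?_)
      tendsto_one_div_add_atTop_nhds_zero_nat
    rw [norm_div, Real.norm_eq_abs, Real.norm_of_nonneg (by positivity : (0:ℝ) ≤ N + 1)]
    gcongr
    have h1 := (hadm (N + 1)).bd hy
    have h2 := (hadm 0).bd hy
    rw [abs_le]
    constructor <;> linarith [h1.1, h1.2, h2.1, h2.2]
  have := (hG y hy).add hdiff
  rw [add_zero] at this
  refine this.congr fun N => ?_
  rw [← add_div]
  congr 1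
  have e := Finset.sum_range_succ' (fun n => F n y) (N + 1)
  rw [Finset.sum_range_succ] at e
  linarith

theorem exists_density (h : PC T a₁ A C D) : ∃ f : ℝ → ℝ, Integrable f lam ∧
    (∀ x ∈ Icc (0:ℝ) 1, 0 ≤ f x) ∧ AntitoneOn f (Icc 0 1) ∧ (∫ x, f x ∂lam) = 1 ∧
    (lam.withDensity fun x => ENNReal.ofReal (f x)).map T
      = lam.withDensity fun x => ENNReal.ofReal (f x) := by
  obtain ⟨M, G, hG, hinv⟩ := h.exists_G
  have hlip : ∀ x ∈ Icc (0:ℝ) 1, ∀ y ∈ Icc (0:ℝ) 1, x ≤ y → G y - G x ≤ M * (y - x) := by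
    intro x hx y hy hxy
    rcases eq_or_lt_of_le hx.1 with e | e
    · rw [← e, hG.zero, sub_zero, sub_zero]; exact hG.le y hy
    rcases eq_or_lt_of_le hxy with e' | e'
    · simp [e']
    have h1 := hG.conc.slope_anti_adjacent (x := 0) (by simp) hy e e'
    rw [hG.zero, sub_zero, sub_zero, div_le_div_iff₀ (by linarith) e] at h1
    have h2 := hG.le x hx
    have h3 : (G y - G x) * x ≤ M * (y - x) * x := by nlinarith
    exact le_of_mul_le_mul_right h3 e
  have hcont : ContinuousOn G (Icc 0 1) := by
    have : LipschitzOnWith (Real.toNNReal M) G (Icc 0 1) := by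
      refine LipschitzOnWith.of_le_add_mul' _ fun x hx y hy => ?_
      rcases le_total x y with hxy | hxy
      · have := hG.mono hx hy hxy
        have h2 := (hG.le 1 (by simp))
        rw [hG.one] at h2
        have : 0 ≤ M * dist x y := mul_nonneg (by linarith) dist_nonneg
        linarith
      · have := hlip y hy x hx hxy
        rw [Real.dist_eq, abs_of_nonneg (by linarith)]
        linarith
    exact this.continuousOn
  obtain ⟨f, fa, fp, fi, fG, fb⟩ := dens hG.conc hcont hG.mono hG.zero
  have fM : ∀ x ∈ Ioo (0:ℝ) 1, f x ≤ M := fun x hx =>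
    le_of_mul_le_mul_right ((fb x hx).trans (hG.le x ⟨hx.1.le, hx.2.le⟩)) hx.1
  have hM0 : 0 ≤ M := by
    have h2 := (hG.le 1 (by simp))
    rw [hG.one] at h2; linarith
  let g : ℝ → ℝ := fun x => if x ≤ 0 then M else if 1 ≤ x then 0 else f x
  have gf : ∀ x ∈ Ioo (0:ℝ) 1, g x = f x := fun x hx => by
    simp only [g]; rw [if_neg (not_le.2 hx.1), if_neg (not_le.2 hx.2)]
  have hae : g =ᵐ[lam] f := by
    rw [lam_eq, ← restrict_Ioo_eq_restrict_Ioc]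
    filter_upwards [ae_restrict_mem measurableSet_Ioo] with x hx using gf x hx
  have hfi : Integrable f lam := by rw [lam_eq]; exact fi
  have hwd : (lam.withDensity fun x => ENNReal.ofReal (g x)) =
      lam.withDensity fun x => ENNReal.ofReal (f x) := by
    refine withDensity_congr_ae ?_
    filter_upwards [hae] with x hx
    rw [hx]
  refine ⟨g, hfi.congr hae.symm, ?_, ?_, ?_, ?_⟩
  · intro x hx
    simp only [g]
    split_ifs with h1 h2
    · exact hM0
    · exact le_rfl
    · exact fp x ⟨not_le.1 h1, not_le.1 h2⟩
  · intro x hx y hy hxy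
    simp only [g]
    split_ifs with h1 h2 h3 h4 h5 h6
    all_goals first
      | exact le_rfl
      | exact hM0
      | (exfalso; linarith)
      | exact fp x ⟨by linarith, by linarith⟩
      | exact fM y ⟨by linarith, by linarith⟩
      | exact fa ⟨by linarith, by linarith⟩ ⟨by linarith, by linarith⟩ hxy
  · rw [integral_congr_ae hae, lam_eq, ← intervalIntegral.integral_of_le zero_le_one,
      fG 1 (by simp), hG.one]
  · rw [hwd]
    have hfin : IsFiniteMeasure (lam.withDensity fun x => ENNReal.ofReal (f x)) :=
      isFiniteMeasure_withDensity_ofReal hfi.2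
    have hac : (lam.withDensity fun x => ENNReal.ofReal (f x)) ≪ lam :=
      withDensity_absolutelyContinuous _ _
    refine ext01 (h.map_ac hac) hac fun y hy => ?_
    have h1 := h.hasSum_cdf hac hy.1
    rw [withDensity_cdf fi fp fG hy]
    refine h1.unique ?_
    have h2 := hinv y hy
    convert h2 using 3 with i
    · exact withDensity_cdf fi fp fG (h.phi_mem i hy.1)
    · exact withDensity_cdf fi fp fG ⟨h.A_nn i, ((h.A_lt i).trans_le (h.C_le i)).le⟩

end PC


/-- index of the branch containing `x` -/
noncomputable def bidx (A C : ℕ → ℝ) (x : ℝ) : ℕ := sInf {i | x ∈ Ico (A i) (C i)}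

/-- itinerary of length `n` -/
noncomputable def itin (T : ℝ → ℝ) (A C : ℕ → ℝ) : ℕ → ℝ → List ℕ
  | 0, _ => []
  | n + 1, x => bidx A C x :: itin T A C n (T x)

theorem withDensity_comp_map {T : ℝ → ℝ} (hT : Measurable T) (ρ : Measure ℝ) {g : ℝ → ENNReal}
    (hg : Measurable g) : (ρ.withDensity (fun x => g (T x))).map T = (ρ.map T).withDensity g := by
  ext S hS
  rw [Measure.map_apply hT hS, withDensity_apply _ (hT hS), withDensity_apply _ hS,
    setLIntegral_map hS hg hT]

namespace PC

variable {T : ℝ → ℝ} {a₁ : ℝ} {A C D : ℕ → ℝ}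

theorem bidx_eq (h : PC T a₁ A C D) {i : ℕ} {x : ℝ} (hx : x ∈ Ico (A i) (C i)) :
    bidx A C x = i := by
  have : {j | x ∈ Ico (A j) (C j)} = {i} := by
    ext j
    simp only [mem_ofPred_eq, mem_singleton_iff]
    constructor
    · intro hj
      by_contra hne
      exact (Set.disjoint_left.1 (h.disj hne)) hj hx
    · rintro rfl; exact hx
  rw [bidx, this]; simp

theorem bidx_mem {x : ℝ} (hx : x ∈ ⋃ i, Ico (A i) (C i)) :
    x ∈ Ico (A (bidx A C x)) (C (bidx A C x)) := by
  have : {i | x ∈ Ico (A i) (C i)}.Nonempty := by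
    obtain ⟨i, hi⟩ := mem_iUnion.1 hx; exact ⟨i, hi⟩
  exact Nat.sInf_mem this

theorem bidx_meas (h : PC T a₁ A C D) : Measurable (bidx A C) := by
  refine measurable_to_countable' fun i => ?_
  have hU : MeasurableSet (⋃ i, Ico (A i) (C i)) := MeasurableSet.iUnion fun i => measurableSet_Ico
  by_cases hi : i = 0
  · have : bidx A C ⁻¹' {i} = Ico (A i) (C i) ∪ (⋃ i, Ico (A i) (C i))ᶜ := by
      ext x
      simp only [mem_preimage, mem_singleton_iff, mem_union]
      constructor
      · intro hx
        by_cases hx' : x ∈ ⋃ i, Ico (A i) (C i)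
        · left; rw [← hx]; exact bidx_mem hx'
        · right; exact hx'
      · rintro (hx | hx)
        · exact h.bidx_eq hx
        · have : {i | x ∈ Ico (A i) (C i)} = ∅ := by
            ext j
            simp only [mem_ofPred_eq, mem_empty_iff_false, iff_false]
            intro hj; exact hx (mem_iUnion.2 ⟨j, hj⟩)
          rw [bidx, this, hi]; simp
    rw [this]; exact measurableSet_Ico.union hU.compl
  · have : bidx A C ⁻¹' {i} = Ico (A i) (C i) := by
      ext x
      simp only [mem_preimage, mem_singleton_iff]
      constructor
      · intro hx
        by_cases hx' : x ∈ ⋃ i, Ico (A i) (C i)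
        · rw [← hx]; exact bidx_mem hx'
        · have : {i | x ∈ Ico (A i) (C i)} = ∅ := by
            ext j
            simp only [mem_ofPred_eq, mem_empty_iff_false, iff_false]
            intro hj; exact hx' (mem_iUnion.2 ⟨j, hj⟩)
          rw [bidx, this] at hx; simp at hx; exact absurd hx.symm hi
      · exact h.bidx_eq
    rw [this]; exact measurableSet_Ico

theorem itin_meas (h : PC T a₁ A C D) {β : Type*} [MeasurableSpace β] (n : ℕ) :
    ∀ q : List ℕ → β, Measurable (fun x => q (itin T A C n x)) := by
  induction n with
  | zero => intro q; simp only [itin]; exact measurable_const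
  | succ n ih =>
    intro q
    have h1 : Measurable (fun p : ℕ × ℝ => q (p.1 :: itin T A C n p.2)) :=
      measurable_from_prod_countable_right fun i => ih (fun L => q (i :: L))
    exact h1.comp (h.bidx_meas.prodMk h.meas)

theorem good_itin (h : PC T a₁ A C D) {K : ENNReal} (hK : K ≠ ⊤) (n : ℕ) :
    ∀ (κ : Measure ℝ) (q : List ℕ → ENNReal), Good κ → (∀ L, q L ≤ K) →
      Good ((κ.withDensity (fun x => q (itin T A C n x))).map T^[n]) := by
  induction n with
  | zero =>
    intro κ q hκ hq
    simp only [itin, Function.iterate_zero, Measure.map_id, withDensity_const]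
    exact good_smul hκ (ne_top_of_le_ne_top hK (hq _))
  | succ n ih =>
    intro κ q hκ hq
    have := hκ.fin
    have hfin : IsFiniteMeasure (κ.withDensity (fun x => q (itin T A C (n+1) x))) := by
      refine isFiniteMeasure_withDensity (ne_top_of_le_ne_top ?_
        (lintegral_mono (fun x => hq (itin T A C (n+1) x))))
      simp [ENNReal.mul_eq_top, hK]
    have e : (κ.withDensity (fun x => q (itin T A C (n+1) x))).map T^[n+1] =
        Measure.sum (fun i => ((((κ.restrict (Ico (A i) (C i))).map T).withDensity
          (fun x => q (i :: itin T A C n x))).map T^[n])) := by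
      conv_lhs => rw [← h.decomp hκ.ac]
      rw [withDensity_sum, Measure.map_sum (h.meas.iterate _).aemeasurable]
      congr 1
      funext i
      rw [← withDensity_comp_map h.meas _ (h.itin_meas n (fun L => q (i :: L))),
        Measure.map_map (h.meas.iterate n) h.meas, ← Function.iterate_succ]
      congr 1
      refine withDensity_congr_ae ?_
      filter_upwards [ae_restrict_mem measurableSet_Ico] with x hx
      simp only [itin, h.bidx_eq hx]
    rw [e]
    have e2 : IsFiniteMeasure (Measure.sum (fun i => ((((κ.restrict (Ico (A i) (C i))).map T).withDensity
          (fun x => q (i :: itin T A C n x))).map T^[n]))) := by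
      rw [← e]; infer_instance
    refine good_sum e2 fun i => ?_
    exact ih ((κ.restrict (Ico (A i) (C i))).map T) (fun L => q (i :: L)) (h.good_branch hκ i)
      (fun L => hq (i :: L))

theorem map_iter_ac (h : PC T a₁ A C D) (n : ℕ) : ∀ {κ : Measure ℝ}, κ ≪ lam → κ.map T^[n] ≪ lam := by
  induction n with
  | zero => intro κ hκ; simpa using hκ
  | succ n ih =>
    intro κ hκ
    rw [Function.iterate_succ, ← Measure.map_map (h.meas.iterate n) h.meas]
    exact ih (h.map_ac hκ)

end PC

/-- points whose orbit stays in the branches and avoids zero -/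
def GoodPt (T : ℝ → ℝ) (A C : ℕ → ℝ) (x : ℝ) : Prop :=
  x ∈ Icc (0:ℝ) 1 ∧ ∀ k, T^[k] x ∈ (⋃ i, Ico (A i) (C i)) ∧ T^[k] x ≠ 0

namespace PC

variable {T : ℝ → ℝ} {a₁ : ℝ} {A C D : ℕ → ℝ}

theorem ae_good (h : PC T a₁ A C D) : ∀ᵐ x ∂lam, GoodPt T A C x := by
  have h1 : ∀ᵐ x ∂lam, x ∈ Icc (0:ℝ) 1 := by rw [ae_iff]; exact lam_compl
  have h2 : ∀ᵐ x ∂lam, ∀ k, T^[k] x ∈ (⋃ i, Ico (A i) (C i)) ∧ T^[k] x ≠ 0 := by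
    rw [ae_all_iff]
    intro k
    have h3 : ∀ᵐ x ∂lam, x ∈ (⋃ i, Ico (A i) (C i)) ∧ x ≠ 0 := by
      refine Filter.Eventually.and ?_ ?_
      · rw [ae_iff]; exact h.cover_null
      · rw [ae_iff]; simpa using lam_noatoms_countable (countable_singleton (0:ℝ))
    exact ae_of_ae_map (h.meas.iterate k).aemeasurable
      ((h.map_iter_ac k (Measure.AbsolutelyContinuous.refl lam)).ae_le h3)
  filter_upwards [h1, h2] with x hx hy using ⟨hx, hy⟩

end PC


/-- number of nonzero entries -/
def cnt : List ℕ → ℕ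
  | [] => 0
  | i :: L => (if i = 0 then 0 else 1) + cnt L

theorem cnt_append (L M : List ℕ) : cnt (L ++ M) = cnt L + cnt M := by
  induction L with
  | nil => simp [cnt]
  | cons i L ih => simp [cnt, ih, add_assoc]

theorem itin_add (T : ℝ → ℝ) (A C : ℕ → ℝ) (m n : ℕ) : ∀ x,
    itin T A C (m + n) x = itin T A C m x ++ itin T A C n (T^[m] x) := by
  induction m with
  | zero => intro x; simp [itin]
  | succ m ih =>
    intro x
    rw [show m + 1 + n = (m + n) + 1 by ring]
    simp only [itin, ih, List.cons_append, Function.iterate_succ_apply]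

theorem itin_length (T : ℝ → ℝ) (A C : ℕ → ℝ) (n : ℕ) : ∀ x, (itin T A C n x).length = n := by
  induction n with
  | zero => intro x; simp [itin]
  | succ n ih => intro x; simp [itin, ih]

theorem itin_take {T : ℝ → ℝ} {A C : ℕ → ℝ} {m n : ℕ} (hmn : m ≤ n) {x y : ℝ}
    (he : itin T A C n x = itin T A C n y) : itin T A C m x = itin T A C m y := by
  obtain ⟨k, rfl⟩ := Nat.exists_eq_add_of_le hmn
  rw [itin_add, itin_add] at he
  exact (List.append_inj he (by simp [itin_length])).1

theorem itin_bidx {T : ℝ → ℝ} {A C : ℕ → ℝ} {m n : ℕ} (hmn : m < n) {x y : ℝ}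
    (he : itin T A C n x = itin T A C n y) : bidx A C (T^[m] x) = bidx A C (T^[m] y) := by
  have h1 := itin_take (show m + 1 ≤ n from hmn) he
  rw [itin_add, itin_add] at h1
  have := (List.append_inj h1 (by simp [itin_length])).2
  simpa [itin] using this

namespace PC

variable {T : ℝ → ℝ} {a₁ : ℝ} {A C D : ℕ → ℝ}

theorem iter_mem (h : PC T a₁ A C D) {x : ℝ} (hx : x ∈ Icc (0:ℝ) 1) (n : ℕ) :
    T^[n] x ∈ Icc (0:ℝ) 1 := by
  cases n with
  | zero => simpa using hx
  | succ n => rw [Function.iterate_succ_apply']; exact h.maps _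

theorem step (h : PC T a₁ A C D) {i : ℕ} {x y q : ℝ} (hx : x ∈ Ico (A i) (C i))
    (hy : y ∈ Ico (A i) (C i)) (hq : 0 ≤ q) (hxy : (1 + q) * x ≤ y) :
    (1 + q * (1 / (1 - a₁)) ^ (if i = 0 then 0 else 1)) * T x ≤ T y := by
  have hx0 : 0 ≤ x := (h.A_nn i).trans hx.1
  have hle : x ≤ y := by nlinarith
  have hc := h.chord i hx hy hle
  have hTx := (h.maps x).1
  have hTy := (h.maps y).1
  have hx1 : x ≤ 1 := (h.B_sub i hx).2
  have ha := h.a_lt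
  have ha0 := h.a_pos
  rcases eq_or_lt_of_le hx.1 with e | e
  · rw [← e, h.mapA]; simpa using hTy
  have key : (1 + q * (1 / (1 - a₁)) ^ (if i = 0 then 0 else 1)) * (x - A i) ≤ y - A i := by
    split_ifs with hi
    · subst hi; rw [h.A0]; simpa using hxy
    · have hA := h.A_ge i hi
      have : (1 / (1 - a₁)) * (x - A i) ≤ x := by
        rw [one_div, inv_mul_le_iff₀ (by linarith)]
        nlinarith
      simp only [pow_one]
      nlinarith [mul_le_mul_of_nonneg_left this hq]
  have : (1 + q * (1 / (1 - a₁)) ^ (if i = 0 then 0 else 1)) * T x * (x - A i) ≤ T y * (x - A i) := by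
    nlinarith [mul_le_mul_of_nonneg_right key hTx]
  exact le_of_mul_le_mul_right this (by linarith)

theorem grow (h : PC T a₁ A C D) (n : ℕ) : ∀ (x y q : ℝ), (∀ k < n, T^[k] x ∈ ⋃ i, Ico (A i) (C i)) →
    (∀ k < n, T^[k] y ∈ ⋃ i, Ico (A i) (C i)) → itin T A C n x = itin T A C n y → 0 ≤ q →
    (1 + q) * x ≤ y →
    (1 + q * (1 / (1 - a₁)) ^ cnt (itin T A C n x)) * T^[n] x ≤ T^[n] y := by
  have ha := h.a_lt
  induction n with
  | zero => intro x y q _ _ _ _ hxy; simpa [itin, cnt] using hxy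
  | succ n ih =>
    intro x y q hx hy he hq hxy
    have hx0 := bidx_mem (hx 0 (by omega))
    have hy0 := bidx_mem (hy 0 (by omega))
    simp only [Function.iterate_zero, id] at hx0 hy0
    simp only [itin, List.cons.injEq] at he
    rw [← he.1] at hy0
    have h1 := h.step hx0 hy0 hq hxy
    have h2 := ih (T x) (T y) _ (fun k hk => hx (k+1) (by omega)) (fun k hk => hy (k+1) (by omega))
      he.2 (mul_nonneg hq (pow_nonneg (by apply one_div_nonneg.2; linarith) _)) h1
    simp only [itin, cnt, Function.iterate_succ_apply, pow_add]
    rwa [← mul_assoc]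

theorem goodpt_iter {x : ℝ} (h : PC T a₁ A C D) (hx : GoodPt T A C x) (m : ℕ) : GoodPt T A C (T^[m] x) :=
  ⟨h.iter_mem hx.1 m, fun k => by rw [← Function.iterate_add_apply]; exact hx.2 _⟩

theorem visit (h : PC T a₁ A C D) {x : ℝ} (hx : GoodPt T A C x) : ∃ k, bidx A C (T^[k] x) ≠ 0 := by
  by_contra! hc
  have hx0 : 0 < x := lt_of_le_of_ne hx.1.1 (Ne.symm (hx.2 0).2)
  have hb : ∀ k, D 0 ^ k * x ≤ T^[k] x := by
    intro k
    induction k with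
    | zero => simp
    | succ k ih =>
      have := bidx_mem (hx.2 k).1
      rw [hc k] at this
      have := h.slope 0 _ this
      rw [h.A0, sub_zero] at this
      rw [Function.iterate_succ_apply', pow_succ]
      nlinarith [h.D_pos 0]
  obtain ⟨k, hk⟩ := pow_unbounded_of_one_lt (1 / x) h.D0
  rw [div_lt_iff₀ hx0] at hk
  linarith [hb k, (h.iter_mem hx.1 k).2]

theorem visits (h : PC T a₁ A C D) (K : ℕ) : ∀ x, GoodPt T A C x →
    ∃ n, K ≤ cnt (itin T A C n x) ∧ bidx A C (T^[n] x) ≠ 0 := by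
  induction K with
  | zero => intro x hx; obtain ⟨k, hk⟩ := h.visit hx; exact ⟨k, Nat.zero_le _, hk⟩
  | succ K ih =>
    intro x hx
    obtain ⟨k, hk⟩ := h.visit hx
    obtain ⟨n, hn, hn'⟩ := ih _ (h.goodpt_iter hx (k+1))
    refine ⟨k + 1 + n, ?_, ?_⟩
    · rw [itin_add, itin_add, cnt_append, cnt_append]
      have : cnt (itin T A C 1 (T^[k] x)) = 1 := by simp [itin, cnt, hk]
      omega
    · rwa [add_comm, Function.iterate_add_apply]

theorem sep (h : PC T a₁ A C D) {n : ℕ} {x y ε : ℝ} (hx1 : x ∈ Icc (0:ℝ) 1) (hy1 : y ∈ Icc (0:ℝ) 1)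
    (hx : ∀ k ≤ n, T^[k] x ∈ ⋃ i, Ico (A i) (C i))
    (hy : ∀ k < n, T^[k] y ∈ ⋃ i, Ico (A i) (C i)) (he : itin T A C n x = itin T A C n y)
    (hε : 0 < ε) (hb : bidx A C (T^[n] x) ≠ 0)
    (hK : 1 < (1 / (1 - a₁)) ^ cnt (itin T A C n x) * ε * a₁) : y < x + ε := by
  by_contra! hc
  have h1 := h.grow n x y ε (fun k hk => hx k hk.le) hy he hε.le (by nlinarith [hx1.2])
  have h2 := (h.iter_mem hy1 n).2
  have h3 : a₁ ≤ T^[n] x := (h.A_ge _ hb).trans (bidx_mem (hx n le_rfl)).1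
  have hp : 0 ≤ (1 / (1 - a₁)) ^ cnt (itin T A C n x) :=
    pow_nonneg (one_div_nonneg.2 (by linarith [h.a_lt])) _
  have := mul_le_mul_of_nonneg_left h3 (mul_nonneg hp hε.le)
  nlinarith [h.a_pos]

theorem conv_rep (h : PC T a₁ A C D) {x ε : ℝ} (hx : GoodPt T A C x) (hε : 0 < ε) :
    ∃ N, ∀ n ≥ N, ∀ y ∈ Icc (0:ℝ) 1, (∀ k < n, T^[k] y ∈ ⋃ i, Ico (A i) (C i)) →
      itin T A C n y = itin T A C n x → |y - x| < ε := by
  have ha := h.a_lt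
  have ha0 := h.a_pos
  have hβ : 1 < 1 / (1 - a₁) := by rw [lt_div_iff₀ (by linarith)]; linarith
  obtain ⟨K, hK⟩ := pow_unbounded_of_one_lt (1 / (ε * a₁)) hβ
  obtain ⟨m, hm, hmb⟩ := h.visits K x hx
  have hK' : 1 < (1 / (1 - a₁)) ^ cnt (itin T A C m x) * ε * a₁ := by
    rw [div_lt_iff₀ (by positivity)] at hK
    have := pow_le_pow_right₀ hβ.le hm
    have := mul_le_mul_of_nonneg_right this (show 0 ≤ ε * a₁ by positivity)
    nlinarith
  refine ⟨m + 1, fun n hn y hy hyk he => ?_⟩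
  have e1 := itin_take (show m ≤ n by omega) he
  have e2 := itin_bidx (show m < n by omega) he
  rw [abs_lt]
  constructor
  · have := h.sep (n := m) hy hx.1 (fun k hk => hyk k (by omega)) (fun k hk => (hx.2 k).1) e1 hε
      (by rwa [e2]) (by rwa [e1])
    linarith
  · have := h.sep (n := m) hx.1 hy (fun k hk => (hx.2 k).1) (fun k hk => hyk k (by omega)) e1.symm hε
      hmb hK'
    linarith

end PC

open Classical in
/-- representative of a cylinder -/
noncomputable def rep (T : ℝ → ℝ) (A C : ℕ → ℝ) (n : ℕ) (L : List ℕ) : ℝ :=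
  if hh : ∃ y ∈ Icc (0:ℝ) 1, (∀ k < n, T^[k] y ∈ ⋃ i, Ico (A i) (C i)) ∧ itin T A C n y = L
  then hh.choose else 0

theorem PC.rep_tendsto {T : ℝ → ℝ} {a₁ : ℝ} {A C D : ℕ → ℝ} (h : PC T a₁ A C D) {x : ℝ}
    (hx : GoodPt T A C x) :
    Tendsto (fun n => rep T A C n (itin T A C n x)) atTop (nhds x) := by
  rw [Metric.tendsto_atTop]
  intro ε hε
  obtain ⟨N, hN⟩ := h.conv_rep hx hε
  refine ⟨N, fun n hn => ?_⟩
  have hh : ∃ y ∈ Icc (0:ℝ) 1, (∀ k < n, T^[k] y ∈ ⋃ i, Ico (A i) (C i)) ∧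
      itin T A C n y = itin T A C n x := ⟨x, hx.1, fun k _ => (hx.2 k).1, rfl⟩
  rw [rep, dif_pos hh, Real.dist_eq]
  have := hh.choose_spec
  exact hN n hn _ this.1 this.2.1 this.2.2


namespace PC

variable {T : ℝ → ℝ} {a₁ : ℝ} {A C D : ℕ → ℝ}

theorem inv_iter (h : PC T a₁ A C D) {ν : Measure ℝ} (hi : ν.map T = ν) (n : ℕ) :
    ν.map T^[n] = ν := by
  induction n with
  | zero => simp
  | succ n ih =>
    rw [Function.iterate_succ, ← Measure.map_map (h.meas.iterate n) h.meas, hi, ih]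

theorem approx (h : PC T a₁ A C D) {ν : Measure ℝ} [IsFiniteMeasure ν] (hν : ν ≪ lam)
    (hi : ν.map T = ν) {ε : ℝ} (hε : 0 < ε) :
    ∃ ρ : Measure ℝ, Good ρ ∧ ∀ S, MeasurableSet S → |ρ.real S - ν.real S| < ε := by
  set g : ℝ → ℝ := fun x => (ν.rnDeriv lam x).toReal with hg
  have gi : Integrable g lam := Measure.integrable_toReal_rnDeriv
  have g0 : ∀ x, 0 ≤ g x := fun x => ENNReal.toReal_nonneg
  obtain ⟨u, ucs, ule, uc, ui⟩ := gi.exists_hasCompactSupport_integral_sub_le (half_pos hε)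
  obtain ⟨K, hK⟩ := ucs.exists_bound_of_continuous uc
  set v : ℝ → ℝ := fun x => max (u x) 0 with hv
  have vc : Continuous v := uc.max continuous_const
  have v0 : ∀ x, 0 ≤ v x := fun x => le_max_right _ _
  have vK : ∀ x, v x ≤ K := fun x => by
    have := hK x
    rw [Real.norm_eq_abs] at this
    exact max_le ((le_abs_self _).trans this) ((abs_nonneg _).trans this)
  set w : ℕ → ℝ → ℝ := fun n x => v (rep T A C n (itin T A C n x)) with hw
  have wm : ∀ n, Measurable (w n) := fun n => h.itin_meas n (fun L => v (rep T A C n L))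
  have wi : ∀ n, Integrable (w n) lam := fun n =>
    Integrable.of_bound (wm n).aestronglyMeasurable K (ae_of_all _ fun x => by
      rw [Real.norm_eq_abs, abs_of_nonneg (v0 _)]; exact vK _)
  have vi : Integrable v lam := ui.pos_part
  have hlim : Tendsto (fun n => ∫ x, |w n x - g x| ∂lam) atTop (nhds (∫ x, |v x - g x| ∂lam)) := by
    refine tendsto_integral_of_dominated_convergence (fun x => K + g x) ?_ ?_ ?_ ?_
    · intro n; exact ((wi n).sub gi).abs.aestronglyMeasurable
    · exact (integrable_const K).add gi
    · intro n
      refine ae_of_all _ fun x => ?_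
      rw [Real.norm_eq_abs, abs_abs]
      have h1 := v0 (rep T A C n (itin T A C n x))
      have h2 := vK (rep T A C n (itin T A C n x))
      have h3 := g0 x
      simp only [hw]
      rw [abs_le]; constructor <;> linarith
    · filter_upwards [h.ae_good] with x hx
      have := (vc.tendsto x).comp (h.rep_tendsto hx)
      exact (this.sub_const (g x)).abs
  have hle : ∫ x, |v x - g x| ∂lam < ε := by
    refine lt_of_le_of_lt ((integral_mono (vi.sub gi).abs (gi.sub ui).norm fun x => ?_).trans ule) (half_lt_self hε)
    simp only [Real.norm_eq_abs, hv, Pi.sub_apply]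
    have h3 := g0 x
    rw [abs_sub_comm (g x)]
    rcases le_total 0 (u x) with h4 | h4
    · rw [max_eq_left h4]
    · rw [max_eq_right h4, abs_of_nonpos (by linarith), abs_of_nonpos (by linarith)]
      linarith
  obtain ⟨n, hn⟩ := (hlim.eventually (gt_mem_nhds hle)).exists
  refine ⟨(lam.withDensity (fun x => ENNReal.ofReal (w n x))).map T^[n],
    h.good_itin (K := ENNReal.ofReal K) ENNReal.ofReal_ne_top n lam
      (fun L => ENNReal.ofReal (v (rep T A C n L))) good_lam
      (fun L => ENNReal.ofReal_le_ofReal (vK _)), fun S hS => ?_⟩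
  have hB : MeasurableSet (T^[n] ⁻¹' S) := (h.meas.iterate n) hS
  have e1 : ((lam.withDensity (fun x => ENNReal.ofReal (w n x))).map T^[n]).real S
      = ∫ x in T^[n] ⁻¹' S, w n x ∂lam := by
    rw [measureReal_def, Measure.map_apply (h.meas.iterate n) hS, withDensity_apply _ hB,
      ← ofReal_integral_eq_lintegral_ofReal (wi n).integrableOn (ae_of_all _ fun x => v0 _),
      ENNReal.toReal_ofReal (integral_nonneg fun x => v0 _)]
  have e2 : ν.real S = ∫ x in T^[n] ⁻¹' S, g x ∂lam := by
    rw [Measure.setIntegral_toReal_rnDeriv hν]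
    conv_lhs => rw [← h.inv_iter hi n]
    rw [measureReal_def, Measure.map_apply (h.meas.iterate n) hS, measureReal_def]
  rw [e1, e2, ← integral_sub (wi n).integrableOn gi.integrableOn]
  calc _ ≤ ∫ x in T^[n] ⁻¹' S, |w n x - g x| ∂lam := abs_integral_le_integral_abs
    _ ≤ ∫ x, |w n x - g x| ∂lam :=
      setIntegral_le_integral ((wi n).sub gi).abs (ae_of_all _ fun x => abs_nonneg _)
    _ < ε := hn

theorem inv_good (h : PC T a₁ A C D) {ν : Measure ℝ} [hf : IsFiniteMeasure ν] (hν : ν ≪ lam)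
    (hi : ν.map T = ν) : Good ν := by
  refine ⟨hf, hν, convex_Icc _ _, fun x hx y hy p q hp hq hpq => ?_⟩
  refine le_of_forall_pos_lt_add fun ε hε => ?_
  obtain ⟨ρ, hρ, hS⟩ := h.approx hν hi (half_pos hε)
  have h1 := abs_lt.1 (hS (Iic x) measurableSet_Iic)
  have h2 := abs_lt.1 (hS (Iic y) measurableSet_Iic)
  have h3 := abs_lt.1 (hS (Iic (p • x + q • y)) measurableSet_Iic)
  have h4 := hρ.conc.2 hx hy hp hq hpq
  simp only [smul_eq_mul] at *
  have e : p * (ε/2) + q * (ε/2) = ε/2 := by rw [← add_mul, hpq, one_mul]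
  nlinarith [mul_le_mul_of_nonneg_left h1.1.le hp, mul_le_mul_of_nonneg_left h2.1.le hq]

end PC

theorem le_sub_add (μ ν : Measure ℝ) [IsFiniteMeasure μ] [IsFiniteMeasure ν] : μ ≤ (μ - ν) + ν := by
  refine Measure.le_iff.2 fun S hS => ?_
  have h1 := congrArg (fun s => s S) (Measure.sub_toSignedMeasure_eq_toSignedMeasure_sub (μ := μ) (ν := ν))
  simp only [sub_apply, Measure.toSignedMeasure_apply_measurable hS] at h1
  have h2 : 0 ≤ (ν - μ).real S := measureReal_nonneg
  have h3 : μ.real S ≤ (μ - ν).real S + ν.real S := by linarith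
  rw [← measureReal_add_apply] at h3
  exact (ENNReal.toReal_le_toReal (measure_ne_top _ _) (measure_ne_top _ _)).1 h3

theorem eq_of_le_mass {μ ν : Measure ℝ} [IsFiniteMeasure μ] [IsFiniteMeasure ν] (h : μ ≤ ν)
    (hm : ν univ ≤ μ univ) : μ = ν := by
  ext S hS
  refine le_antisymm (h S) ?_
  have h1 := measure_add_measure_compl (μ := μ) hS
  have h2 := measure_add_measure_compl (μ := ν) hS
  have h3 : ν S + ν Sᶜ ≤ μ S + ν Sᶜ := by
    rw [h2]; refine hm.trans ?_; rw [← h1]; gcongr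
  exact (ENNReal.add_le_add_iff_right (measure_ne_top _ _)).1 h3

namespace PC

variable {T : ℝ → ℝ} {a₁ : ℝ} {A C D : ℕ → ℝ}

theorem sub_inv (h : PC T a₁ A C D) {μ ν : Measure ℝ} [IsFiniteMeasure μ] [IsFiniteMeasure ν]
    (hμ : μ.map T = μ) (hν : ν.map T = ν) : (μ - ν).map T = μ - ν := by
  symm
  refine eq_of_le_mass ?_ ?_
  · refine Measure.sub_le_of_le_add ?_
    calc μ = μ.map T := hμ.symm
      _ ≤ ((μ - ν) + ν).map T := Measure.map_mono (le_sub_add μ ν) h.meas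
      _ = (μ - ν).map T + ν := by rw [Measure.map_add _ _ h.meas, hν]
  · rw [Measure.map_apply h.meas MeasurableSet.univ]; simp

theorem unique (h : PC T a₁ A C D) {μ ν : Measure ℝ} [IsProbabilityMeasure μ]
    [IsProbabilityMeasure ν] (hμl : μ ≪ lam) (hνl : ν ≪ lam)
    (hμ : μ.map T = μ) (hν : ν.map T = ν) : μ = ν := by
  by_cases h1 : μ - ν = 0
  · refine eq_of_le_mass ?_ (by simp)
    have := le_sub_add μ ν
    rwa [h1, zero_add] at this
  by_cases h2 : ν - μ = 0
  · symm
    refine eq_of_le_mass ?_ (by simp)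
    have := le_sub_add ν μ
    rwa [h2, zero_add] at this
  exfalso
  have g1 := h.inv_good ((Measure.absolutelyContinuous_of_le Measure.sub_le).trans hμl) (h.sub_inv hμ hν)
  have g2 := h.inv_good ((Measure.absolutelyContinuous_of_le Measure.sub_le).trans hνl) (h.sub_inv hν hμ)
  obtain ⟨δ, d0, d1, hδ⟩ := good_charges g1 h1
  obtain ⟨η, e0, e1, hη⟩ := good_charges g2 h2
  obtain ⟨S, hS, s1, s2⟩ := Measure.mutually_singular_measure_sub (μ := μ) (ν := ν)
  have k1 := hδ S hS s1
  have k2 := hη _ hS.compl s2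
  have : volume (Ioo 0 (min δ η)) = 0 := by
    refine measure_mono_null ?_ (measure_union_null k1 k2)
    intro x hx
    by_cases hxS : x ∈ S
    · left; exact ⟨hxS, hx.1, hx.2.trans_le (min_le_left _ _)⟩
    · right; exact ⟨hxS, hx.1, hx.2.trans_le (min_le_right _ _)⟩
  rw [Real.volume_Ioo, sub_zero, ENNReal.ofReal_eq_zero] at this
  exact absurd (lt_min d0 e0) (not_lt.2 this)

end PC


/-- prepend a value to a sequence -/
def cons0 (b : ℝ) (s : ℕ → ℝ) : ℕ → ℝ
  | 0 => b
  | n + 1 => s n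

theorem exists_PC {τ : ℝ → ℝ} {a₁ α₁ : ℝ} {a c d : ℕ → ℝ} (hτ : TpcInfty τ a₁ α₁ a c d) :
    ∃ T A C D, PC T a₁ A C D ∧ ∀ x ∈ (⋃ i, Ico (A i) (C i)), T x = τ x := by
  classical
  set A := cons0 0 a with hA
  set C := cons0 a₁ c with hC
  set D := cons0 α₁ d with hD
  set U := ⋃ i, Ico (A i) (C i) with hU
  have hB : ∀ i, Ico (A i) (C i) ⊆ U := fun i => subset_iUnion (fun i => Ico (A i) (C i)) i
  set T := U.indicator τ with hT
  have hTe : ∀ i, EqOn τ T (Ico (A i) (C i)) := fun i x hx => (indicator_of_mem (hB i hx) τ).symm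
  have b0 := hτ.branch_sub 0
  have hAn : ∀ i, 0 ≤ A i := by
    intro i; cases i with
    | zero => exact le_rfl
    | succ i => exact hτ.a₁_pos.le.trans (hτ.branch_sub i).1
  have hlt : ∀ i, A i < C i := by
    intro i; cases i with
    | zero => exact hτ.a₁_pos
    | succ i => exact (hτ.branch_sub i).2.1
  have hC1 : ∀ i, C i ≤ 1 := by
    intro i; cases i with
    | zero => exact hτ.a₁_le
    | succ i => exact (hτ.branch_sub i).2.2
  have hUI : U ⊆ Icc 0 1 := by
    intro x hx
    obtain ⟨i, hi⟩ := mem_iUnion.1 hx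
    exact ⟨(hAn i).trans hi.1, hi.2.le.trans (hC1 i)⟩
  have hcont : ∀ i, ContinuousOn τ (Ico (A i) (C i)) := by
    intro i; cases i with
    | zero => exact hτ.cont₀
    | succ i => exact hτ.cont i
  have hconv : ∀ i, ConvexOn ℝ (Ico (A i) (C i)) τ := by
    intro i; cases i with
    | zero => exact hτ.conv₀
    | succ i => exact hτ.conv i
  have hmapA : ∀ i, τ (A i) = 0 := by
    intro i; cases i with
    | zero => exact hτ.map₀
    | succ i => exact hτ.map_a i
  have hder : ∀ i, HasDerivWithinAt τ (D i) (Ici (A i)) (A i) := by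
    intro i; cases i with
    | zero => exact hτ.deriv₀
    | succ i => exact hτ.deriv_a i
  have hAm : ∀ i, A i ∈ Ico (A i) (C i) := fun i => ⟨le_rfl, hlt i⟩
  have hUm : MeasurableSet U := MeasurableSet.iUnion fun i => measurableSet_Ico
  refine ⟨T, A, C, D, ?_, fun x hx => indicator_of_mem hx τ⟩
  refine
    { meas := ?_, maps := ?_, a_pos := hτ.a₁_pos, a_lt := b0.1.trans_lt (b0.2.1.trans_le b0.2.2),
      A0 := rfl, A_ge := ?_, A_nn := hAn, A_lt := hlt, C_le := hC1, disj := ?_, cover := ?_,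
      conv := fun i => (hconv i).congr (hTe i), mapA := ?_, D_pos := ?_, D0 := hτ.α₁_gt,
      slope := ?_, sumD := ?_ }
  · refine measurable_of_restrict_of_restrict_compl hUm ?_ ?_
    · have : ∀ i, Measurable ((Ico (A i) (C i)).domRestrict T) := fun i =>
        (((hcont i).congr (fun x hx => (hTe i hx).symm)).domRestrict).measurable
      intro S hS
      have e : U.domRestrict T ⁻¹' S = Subtype.val ⁻¹' (⋃ i, Ico (A i) (C i) ∩ T ⁻¹' S) := by
        ext x
        obtain ⟨i, hi⟩ := mem_iUnion.1 x.2
        simp only [mem_preimage, domRestrict_apply, mem_iUnion, mem_inter_iff]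
        exact ⟨fun h => ⟨i, hi, h⟩, fun ⟨_, _, h⟩ => h⟩
      rw [e]
      refine measurable_subtype_coe (MeasurableSet.iUnion fun i => ?_)
      have := (MeasurableEmbedding.subtype_coe (measurableSet_Ico (a := A i) (b := C i))).measurableSet_image.2
        (this i hS)
      convert this using 1
      ext x
      simp [and_comm]
    · have : Uᶜ.domRestrict T = fun _ => 0 := by
        funext x
        exact indicator_of_notMem x.2 τ
      rw [this]; exact measurable_const
  · intro x
    by_cases hx : x ∈ U
    · rw [hT, indicator_of_mem hx]; exact hτ.mapsTo (hUI hx)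
    · rw [hT, indicator_of_notMem hx]; simp
  · intro i hi
    cases i with
    | zero => exact absurd rfl hi
    | succ i => exact (hτ.branch_sub i).1
  · intro i j hij
    have h0 : ∀ j, Disjoint (Ico 0 a₁) (Ico (a j) (c j)) := fun j =>
      Set.disjoint_left.2 fun x hx hy => absurd hx.2 (not_lt.2 ((hτ.branch_sub j).1.trans hy.1))
    cases i with
    | zero =>
      cases j with
      | zero => exact absurd rfl hij
      | succ j => exact h0 j
    | succ i =>
      cases j with
      | zero => exact (h0 i).symm
      | succ j => exact hτ.branch_disj (fun e => hij (by rw [e]))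
  · obtain ⟨E, hE, hc⟩ := hτ.cover
    refine hE.mono ?_
    rintro x ⟨hx, hxU⟩
    rcases hc hx with (h1 | h1) | h1
    · exact absurd (hB 0 h1) hxU
    · obtain ⟨i, hi⟩ := mem_iUnion.1 h1
      exact absurd (hB (i+1) hi) hxU
    · exact h1
  · intro i; rw [← hTe i (hAm i)]; exact hmapA i
  · intro i; cases i with
    | zero => exact zero_lt_one.trans hτ.α₁_gt
    | succ i => exact hτ.d_pos i
  · intro i x hx
    rw [← hTe i hx]
    rcases eq_or_lt_of_le hx.1 with e | e
    · rw [← e, hmapA]; simp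
    · have := (hconv i).le_slope_of_hasDerivWithinAt_Ioi (hAm i) hx e
        ((hder i).mono Ioi_subset_Ici_self)
      rw [slope_def_field, hmapA, sub_zero, le_div_iff₀ (by linarith)] at this
      exact this
  · rw [← summable_nat_add_iff 1]; exact hτ.sum_d

/-- Any `τ ∈ T_pc^∞(I)` admits a unique absolutely continuous invariant probability
measure `μ = f*·λ`, whose density `f*` is non-negative and non-increasing. -/
theorem stmt3 (τ : ℝ → ℝ) (a₁ α₁ : ℝ) (a c d : ℕ → ℝ)
    (hτ : TpcInfty τ a₁ α₁ a c d) :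
    ∃ f : ℝ → ℝ, MeasureTheory.Integrable f lam ∧
      (∀ x ∈ Set.Icc (0:ℝ) 1, 0 ≤ f x) ∧
      AntitoneOn f (Set.Icc 0 1) ∧
      (∫ x, f x ∂lam) = 1 ∧
      (∀ A : Set ℝ, MeasurableSet A → A ⊆ Set.Icc 0 1 →
        lam.withDensity (fun x => ENNReal.ofReal (f x)) (τ ⁻¹' A) =
        lam.withDensity (fun x => ENNReal.ofReal (f x)) A) ∧
      (∀ ν : MeasureTheory.Measure ℝ, MeasureTheory.IsProbabilityMeasure ν →
        ν ≪ lam →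
        (∀ A : Set ℝ, MeasurableSet A → A ⊆ Set.Icc 0 1 → ν (τ ⁻¹' A) = ν A) →
        ν = lam.withDensity (fun x => ENNReal.ofReal (f x))) := by
  obtain ⟨T, A, C, D, h, hTτ⟩ := exists_PC hτ
  have pre : ∀ ν : Measure ℝ, ν ≪ lam → ∀ S, ν (τ ⁻¹' S) = ν (T ⁻¹' S) := by
    intro ν hν S
    refine measure_congr ?_
    have h1 : ∀ᵐ x ∂ν, x ∈ ⋃ i, Ico (A i) (C i) := by
      rw [ae_iff]; exact hν h.cover_null
    filter_upwards [h1] with x hx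
    show (τ x ∈ S) = (T x ∈ S)
    rw [hTτ x hx]
  obtain ⟨f, fi, f0, fa, f1, finv⟩ := h.exists_density
  have fl : lam.withDensity (fun x => ENNReal.ofReal (f x)) ≪ lam := withDensity_absolutelyContinuous _ _
  have fae : 0 ≤ᵐ[lam] f := by
    have h1 : ∀ᵐ x ∂lam, x ∈ Icc (0:ℝ) 1 := by rw [ae_iff]; exact lam_compl
    filter_upwards [h1] with x hx using f0 x hx
  have fp : IsProbabilityMeasure (lam.withDensity (fun x => ENNReal.ofReal (f x))) := ⟨by
    rw [withDensity_apply _ MeasurableSet.univ, Measure.restrict_univ,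
      ← ofReal_integral_eq_lintegral_ofReal fi fae, f1, ENNReal.ofReal_one]⟩
  refine ⟨f, fi, f0, fa, f1, fun S hS _ => ?_, fun ν hp hν hinv => ?_⟩
  · rw [pre _ fl, ← Measure.map_apply h.meas hS, finv]
  · refine h.unique hν fl ?_ finv
    ext S hS
    rw [Measure.map_apply h.meas hS]
    have hm : MeasurableSet (S ∩ Icc (0:ℝ) 1) := hS.inter measurableSet_Icc
    have e1 : T ⁻¹' S = T ⁻¹' (S ∩ Icc 0 1) := by
      ext x
      exact ⟨fun hx => ⟨hx, h.maps x⟩, fun hx => hx.1⟩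
    rw [e1, ← pre ν hν, hinv _ hm inter_subset_right, measure_inter_conull (hν lam_compl)]
end

section
/- Let τ ∈ T_pc^{∞,0}(I). Then there exists a non-increasing, non-negative function f* ∈ L¹(I,λ) with ∫₀¹ f* dλ = 1 such that the probability measure μ = f*·λ is τ-invariant (i.e., μ(τ⁻¹(A)) = μ(A) for every Borel set A ⊆ [0,1]). Moreover μ is the unique τ-invariant probability measure absolutely continuous with respect to λ. -/
open MeasureTheory Set Filter

/-- The class `T_pc^{∞,0}(I)` of piecewise convex maps with countably many branches whose
left endpoints accumulate at `0`: a strictly decreasing sequence `b j = a_{0,-(j+1)}` of left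
endpoints tending to `0` (branches `[b j, c' j)`, right derivatives `e j = τ'(b j)` there),
together with a countable family of branches `[a i, c i) ⊆ [b 0, 1]` (right derivatives
`d i = τ'(a i)`), all branches pairwise disjoint and covering `[0,1]` up to a countable set,
with `D₁ = ∑ 1/e j < 1` and `∑ 1/d i < ∞`. -/
structure TpcInftyZero (τ : ℝ → ℝ) (a c b c' d e : ℕ → ℝ) : Prop where
  mapsTo : Set.MapsTo τ (Set.Icc 0 1) (Set.Icc 0 1)
  b_anti : StrictAnti b
  b_pos : ∀ j, 0 < b j
  b_lim : Filter.Tendsto b Filter.atTop (nhds 0)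
  b_lt : ∀ j, b j < c' j
  c'_le : ∀ j, c' j ≤ 1
  a_mem : ∀ i, b 0 ≤ a i ∧ a i < c i ∧ c i ≤ 1
  branch_disj : Pairwise (Function.onFun Disjoint fun p : ℕ ⊕ ℕ =>
    Sum.elim (fun i => Set.Ico (a i) (c i)) (fun j => Set.Ico (b j) (c' j)) p)
  cover : ∃ E : Set ℝ, E.Countable ∧
    Set.Icc (0:ℝ) 1 ⊆ ((⋃ i, Set.Ico (a i) (c i)) ∪ ⋃ j, Set.Ico (b j) (c' j)) ∪ E
  cont_a : ∀ i, ContinuousOn τ (Set.Ico (a i) (c i))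
  conv_a : ∀ i, ConvexOn ℝ (Set.Ico (a i) (c i)) τ
  diff_a : ∀ i, ∀ x ∈ Set.Ico (a i) (c i), DifferentiableWithinAt ℝ τ (Set.Ico (a i) (c i)) x
  map_a : ∀ i, τ (a i) = 0
  deriv_a : ∀ i, HasDerivWithinAt τ (d i) (Set.Ici (a i)) (a i)
  d_pos : ∀ i, 0 < d i
  cont_b : ∀ j, ContinuousOn τ (Set.Ico (b j) (c' j))
  conv_b : ∀ j, ConvexOn ℝ (Set.Ico (b j) (c' j)) τ
  diff_b : ∀ j, ∀ x ∈ Set.Ico (b j) (c' j), DifferentiableWithinAt ℝ τ (Set.Ico (b j) (c' j)) x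
  map_b : ∀ j, τ (b j) = 0
  deriv_b : ∀ j, HasDerivWithinAt τ (e j) (Set.Ici (b j)) (b j)
  e_pos : ∀ j, 0 < e j
  sum_d : Summable fun i => 1 / d i
  sum_e : Summable fun j => 1 / e j
  D₁_lt : (∑' j, 1 / e j) < 1


noncomputable section

namespace PCM

/-- distribution function -/
def F (m : Measure ℝ) (x : ℝ) : ℝ := m.real (Iic x)

instance : IsFiniteMeasure lam := by unfold lam; infer_instance

theorem lam_univ : lam.real univ = 1 := by simp [lam, measureReal_def]

theorem F_mono (m : Measure ℝ) [IsFiniteMeasure m] : Monotone (F m) :=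
  fun _ _ h => measureReal_mono (Iic_subset_Iic.2 h)

theorem F_nonneg (m : Measure ℝ) (x : ℝ) : 0 ≤ F m x := measureReal_nonneg

theorem F_le (m : Measure ℝ) [IsFiniteMeasure m] (x : ℝ) : F m x ≤ m.real univ :=
  measureReal_mono (subset_univ _)

theorem F_Ioc (m : Measure ℝ) [IsFiniteMeasure m] {x y : ℝ} (h : x ≤ y) :
    m.real (Ioc x y) = F m y - F m x := by
  unfold F
  rw [← Iic_sdiff_Iic, measureReal_sdiff (Iic_subset_Iic.2 h) measurableSet_Iic]

theorem F_lam {x : ℝ} (hx : 0 ≤ x) : F lam x = min x 1 := by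
  unfold F lam
  rw [measureReal_restrict_apply measurableSet_Iic]
  have : Iic x ∩ Icc 0 1 = Icc 0 (min x 1) := by ext; simp; tauto
  rw [this, measureReal_def, Real.volume_Icc, sub_zero,
    ENNReal.toReal_ofReal (le_min hx zero_le_one)]

theorem F_lam_neg {x : ℝ} (hx : x ≤ 0) : F lam x = 0 := by
  refine le_antisymm ?_ (F_nonneg _ _)
  calc F lam x ≤ F lam 0 := F_mono _ hx
    _ = 0 := by rw [F_lam le_rfl]; simp

theorem le_of_F (k m : Measure ℝ) [IsFiniteMeasure k] [IsFiniteMeasure m]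
    (hk : Continuous (F k)) (hm : Continuous (F m))
    (h : ∀ x y, x ≤ y → F k y - F k x ≤ F m y - F m x) : k ≤ m := by
  let H : StieltjesFunction ℝ := ⟨fun x => F m x - F k x, fun x y hxy => by
    have := h x y hxy; simp only; linarith, fun x => (hm.sub hk).continuousWithinAt⟩
  have : k + H.measure = m := by
    refine Measure.ext_of_Ioc' _ _ ?_ ?_
    · intro x y _
      rw [Measure.add_apply, StieltjesFunction.measure_Ioc]
      exact ENNReal.add_ne_top.2 ⟨measure_ne_top _ _, ENNReal.ofReal_ne_top⟩
    · intro x y hxy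
      rw [Measure.add_apply, StieltjesFunction.measure_Ioc, ← ofReal_measureReal,
        ← ofReal_measureReal (μ := m), F_Ioc _ hxy.le, F_Ioc _ hxy.le, ← ENNReal.ofReal_add]
      · congr 1
        change _ + ((F m y - F k y) - (F m x - F k x)) = _
        ring
      · linarith [F_mono k hxy.le]
      · have := h x y hxy.le
        change 0 ≤ ((F m y - F k y) - (F m x - F k x))
        linarith
  rw [← this]
  exact Measure.le_add_right le_rfl

/-- A finite measure on `[0,1]` with non-increasing density bounded by `M` times its mass. -/
structure Good (M : ℝ) (m : Measure ℝ) : Prop where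
  fin : IsFiniteMeasure m
  supp : m (Ioi 1) = 0
  conc : ConcaveOn ℝ (Ici 0) (F m)
  bd : ∀ x, 0 ≤ x → F m x ≤ M * m.real univ * x

theorem Good.F_neg {M m} (h : Good M m) {x : ℝ} (hx : x ≤ 0) : F m x = 0 := by
  have := h.fin
  refine le_antisymm ?_ (F_nonneg _ _)
  calc F m x ≤ F m 0 := F_mono _ hx
    _ ≤ _ := h.bd 0 le_rfl
    _ = 0 := by simp

theorem F_one {m : Measure ℝ} [IsFiniteMeasure m] (h : m (Ioi 1) = 0) {x : ℝ} (hx : 1 ≤ x) :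
    F m x = m.real univ := by
  refine le_antisymm (F_le _ _) ?_
  refine le_trans ?_ (F_mono m hx)
  unfold F
  have h1 : m.real (Ioi 1) = 0 := by simp [measureReal_def, h]
  have h2 := measureReal_add_measureReal_compl (μ := m) (measurableSet_Iic (a := (1:ℝ)))
  rw [compl_Iic, h1] at h2
  linarith

theorem Good.lip0 {M m} (h : Good M m) {x y : ℝ} (hx : 0 ≤ x) (hxy : x ≤ y) :
    F m y - F m x ≤ M * m.real univ * (y - x) := by
  rcases hxy.eq_or_lt with rfl | hxy
  · simp
  rcases hx.eq_or_lt with rfl | hx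
  · rw [h.F_neg le_rfl]; simpa using h.bd y hxy.le
  have h1 := h.conc.slope_anti_adjacent (mem_Ici.2 le_rfl) (mem_Ici.2 (hx.trans hxy).le) hx hxy
  rw [h.F_neg le_rfl, sub_zero, sub_zero] at h1
  have h2 : F m x / x ≤ M * m.real univ := (div_le_iff₀ hx).2 (h.bd x hx.le)
  exact (div_le_iff₀ (by linarith)).1 (h1.trans h2)

theorem Good.K_nonneg {M m} (h : Good M m) : 0 ≤ M * m.real univ := by
  have := h.bd 1 zero_le_one
  have := F_nonneg m 1
  linarith

theorem Good.lip {M m} (h : Good M m) {x y : ℝ} (hxy : x ≤ y) :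
    F m y - F m x ≤ M * m.real univ * (y - x) := by
  rcases le_total 0 x with hx | hx
  · exact h.lip0 hx hxy
  rcases le_total 0 y with hy | hy
  · rw [h.F_neg hx]
    have := h.bd y hy
    nlinarith [h.K_nonneg]
  · rw [h.F_neg hx, h.F_neg hy]
    nlinarith [h.K_nonneg]

theorem cont_of_lip {f : ℝ → ℝ} {K : ℝ} (hK : 0 ≤ K) (hf : Monotone f)
    (h : ∀ x y, x ≤ y → f y - f x ≤ K * (y - x)) : Continuous f := by
  have : LipschitzWith ⟨K, hK⟩ f := by
    refine LipschitzWith.of_dist_le_mul fun x y => ?_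
    rw [Real.dist_eq, Real.dist_eq]
    change _ ≤ K * _
    rcases le_total x y with hxy | hxy
    · rw [abs_sub_comm, abs_sub_comm x, abs_of_nonneg (sub_nonneg.2 (hf hxy)),
        abs_of_nonneg (sub_nonneg.2 hxy)]
      exact h _ _ hxy
    · rw [abs_of_nonneg (sub_nonneg.2 (hf hxy)),
        abs_of_nonneg (sub_nonneg.2 hxy)]
      exact h _ _ hxy
  exact this.continuous

theorem Good.cont {M m} (h : Good M m) : Continuous (F m) := by
  have := h.fin
  exact cont_of_lip h.K_nonneg (F_mono m) fun x y hxy => h.lip hxy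

theorem good_restrict {t M : ℝ} (ht : 0 < t) (ht1 : t ≤ 1) (hM : 1 ≤ M * t) :
    Good M (lam.restrict (Iic t)) ∧ (lam.restrict (Iic t)).real univ = t := by
  have hu : (lam.restrict (Iic t)).real univ = t := by
    rw [measureReal_restrict_apply MeasurableSet.univ, univ_inter]
    change F lam t = t
    rw [F_lam ht.le, min_eq_left ht1]
  have hF : ∀ x, 0 ≤ x → F (lam.restrict (Iic t)) x = min x t := by
    intro x hx
    unfold F
    rw [measureReal_restrict_apply measurableSet_Iic, Iic_inter_Iic]
    change F lam _ = _
    rw [F_lam (le_inf hx ht.le)]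
    exact min_eq_left ((min_le_right _ _).trans ht1)
  refine ⟨⟨inferInstance, ?_, ?_, ?_⟩, hu⟩
  · rw [Measure.restrict_apply measurableSet_Ioi]
    convert measure_empty (μ := lam)
    ext; simp; intro h; linarith
  · refine ConcaveOn.congr (f := fun x => min x t) ?_ fun x hx => (hF x hx).symm
    exact (concaveOn_id (convex_Ici 0)).inf (concaveOn_const t (convex_Ici 0))
  · intro x hx
    rw [hF x hx, hu]
    exact (min_le_left _ _).trans (by nlinarith)

theorem lam_restrict_one : lam.restrict (Iic 1) = lam := by
  unfold lam
  rw [Measure.restrict_restrict measurableSet_Iic]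
  congr 1; ext; simp

theorem good_lam {M : ℝ} (hM : 1 ≤ M) : Good M lam := by
  have := (good_restrict (M := M) one_pos le_rfl (by linarith)).1
  rwa [lam_restrict_one] at this

theorem F_smul (c : ℝ) (hc : 0 ≤ c) (m : Measure ℝ) (x : ℝ) :
    F (ENNReal.ofReal c • m) x = c * F m x := by
  unfold F
  simp [measureReal_def, hc]

theorem Good.smul {M m} (h : Good M m) {c : ℝ} (hc : 0 ≤ c) : Good M (ENNReal.ofReal c • m) := by
  have := h.fin
  refine ⟨⟨?_⟩, ?_, ?_, ?_⟩
  · simp [ENNReal.mul_lt_top_iff]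
  · simp [h.supp]
  · have := h.conc.smul hc
    refine this.congr fun x _ => ?_
    simp [F_smul c hc]
  · intro x hx
    rw [F_smul c hc]
    have := mul_le_mul_of_nonneg_left (h.bd x hx) hc
    simp only [measureReal_ennreal_smul_apply, ENNReal.toReal_ofReal hc]
    linarith

theorem Good.le_lam {M m} (h : Good M m) : m ≤ ENNReal.ofReal (M * m.real univ) • lam := by
  have := h.fin
  have hl := (good_lam le_rfl).smul h.K_nonneg
  have := hl.fin
  refine le_of_F _ _ h.cont hl.cont fun x y hxy => ?_
  rw [F_smul _ h.K_nonneg, F_smul _ h.K_nonneg, ← mul_sub]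
  rcases le_total y 0 with hy | hy
  · rw [h.F_neg hy, h.F_neg (hxy.trans hy), F_lam_neg hy, F_lam_neg (hxy.trans hy)]; simp
  rcases le_total x 0 with hx | hx
  · rw [h.F_neg hx, F_lam_neg hx, F_lam hy, sub_zero, sub_zero]
    rcases le_total y 1 with h1 | h1
    · rw [min_eq_left h1]; exact h.bd y hy
    · rw [min_eq_right h1]
      rw [F_one h.supp h1, ← F_one h.supp le_rfl]
      conv_rhs => rw [F_one h.supp le_rfl]
      exact h.bd 1 zero_le_one
  · rw [F_lam hx, F_lam hy]
    rcases le_total y 1 with h1 | h1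
    · rw [min_eq_left h1, min_eq_left (hxy.trans h1)]; exact h.lip hxy
    · rw [min_eq_right h1]
      rcases le_total x 1 with h2 | h2
      · rw [F_one h.supp h1, ← F_one h.supp le_rfl, min_eq_left h2]
        conv_rhs => rw [F_one h.supp le_rfl]
        exact h.lip h2
      · rw [F_one h.supp h1, F_one h.supp h2, min_eq_right h2]; simp

theorem Good.ac {M m} (h : Good M m) : m ≪ lam :=
  (Measure.absolutelyContinuous_of_le h.le_lam).trans (Measure.smul_absolutelyContinuous)

/-- Data of the inverse branches. -/
structure Core (T : ℝ → ℝ) (L R w : ℕ ⊕ ℕ → ℝ) (ψ : ℕ ⊕ ℕ → ℝ → ℝ) (b : ℕ → ℝ) (D W : ℝ) :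
    Prop where
  meas : Measurable T
  maps : ∀ x, T x ∈ Icc (0:ℝ) 1
  Lpos : ∀ p, 0 ≤ L p
  cdf : ∀ m : Measure ℝ, IsFiniteMeasure m → m ≪ lam → ∀ x, 0 ≤ x →
    HasSum (fun p => F m (ψ p x) - F m (L p)) (F (m.map T) x)
  ψ_mem : ∀ p x, 0 ≤ x → ψ p x ∈ Icc (L p) (R p)
  ψ_conc : ∀ p, ConcaveOn ℝ (Ici 0) (ψ p)
  ψ_le : ∀ p x, 0 ≤ x → ψ p x ≤ L p + w p * x
  b_pos : ∀ j, 0 < b j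
  b_lim : Tendsto b atTop (nhds 0)
  cut : ∀ j p, R p ≤ b j ∨ b j ≤ L p
  w_nonneg : ∀ p, 0 ≤ w p
  sum_D : HasSum (fun j => w (Sum.inr j)) D
  D_lt : D < 1
  sum_W : HasSum (fun i => w (Sum.inl i)) W
  L_ge : ∀ i, b 0 ≤ L (Sum.inl i)

section
variable {T : ℝ → ℝ} {L R w : ℕ ⊕ ℕ → ℝ} {ψ : ℕ ⊕ ℕ → ℝ → ℝ} {b : ℕ → ℝ} {D W : ℝ}

theorem Core.conc (h : Core T L R w ψ b D W) (m : Measure ℝ) [IsFiniteMeasure m] (hm : m ≪ lam)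
    (hc : ∀ p, ConcaveOn ℝ (Icc (L p) (R p)) (F m)) : ConcaveOn ℝ (Ici 0) (F (m.map T)) := by
  refine ⟨convex_Ici 0, fun x hx y hy α β hα hβ hαβ => ?_⟩
  have hz : α • x + β • y ∈ Ici (0:ℝ) := convex_Ici 0 hx hy hα hβ hαβ
  have hX := h.cdf m inferInstance hm x hx
  have hY := h.cdf m inferInstance hm y hy
  have hZ := h.cdf m inferInstance hm _ hz
  refine hasSum_le (fun p => ?_) ((hX.mul_left α).add (hY.mul_left β)) hZ
  have h1 := (hc p).2 (h.ψ_mem p x hx) (h.ψ_mem p y hy) hα hβ hαβ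
  have h2 := F_mono m ((h.ψ_conc p).2 hx hy hα hβ hαβ)
  have h3 : α * F m (L p) + β * F m (L p) = F m (L p) := by rw [← add_mul, hαβ, one_mul]
  simp only [smul_eq_mul] at h1 h2 ⊢
  linarith

theorem Core.slope (h : Core T L R w ψ b D W) {M : ℝ} {m : Measure ℝ} (hm : Good M m)
    {x : ℝ} (hx : 0 ≤ x) :
    F (m.map T) x ≤ (D * M + W / b 0) * m.real univ * x := by
  have := hm.fin
  have hX := h.cdf m hm.fin hm.ac x hx
  have hinr : HasSum ((Sum.elim (fun i => w (Sum.inl i) * (m.real univ / b 0 * x))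
      (fun j => w (Sum.inr j) * (M * m.real univ * x))) : ℕ ⊕ ℕ → ℝ)
      (W * (m.real univ / b 0 * x) + D * (M * m.real univ * x)) :=
    HasSum.sum (h.sum_W.mul_right _) (h.sum_D.mul_right _)
  refine (hasSum_le (fun p => ?_) hX hinr).trans (le_of_eq (by ring))
  have hL : L p ≤ L p + w p * x := by nlinarith [h.w_nonneg p]
  have h1 := F_mono m (h.ψ_le p x hx)
  have h2 := hm.lip0 (h.Lpos p) hL
  have hwx : 0 ≤ w p * x := mul_nonneg (h.w_nonneg p) hx
  rcases p with i | j
  · simp only [Sum.elim_inl]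
    have hb := h.b_pos 0
    have hLi := h.L_ge i
    have key : F m (L (Sum.inl i) + w (Sum.inl i) * x) - F m (L (Sum.inl i)) ≤
        m.real univ / b 0 * (w (Sum.inl i) * x) := by
      rcases hwx.eq_or_lt with h0 | h0
      · rw [← h0]; simp
      have h3 := hm.conc.slope_anti_adjacent (mem_Ici.2 le_rfl)
        (mem_Ici.2 (by linarith : 0 ≤ L (Sum.inl i) + w (Sum.inl i) * x))
        (hb.trans_le hLi) (lt_add_of_pos_right _ h0)
      have h4 : (F m (L (Sum.inl i)) - F m 0) / (L (Sum.inl i) - 0) ≤ m.real univ / b 0 := by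
        rw [hm.F_neg le_rfl, sub_zero, sub_zero]
        exact div_le_div₀ measureReal_nonneg (F_le _ _) hb hLi
      have h5 := (div_le_iff₀ (by linarith)).1 (h3.trans h4)
      rw [add_sub_cancel_left] at h5
      exact h5
    calc _ ≤ m.real univ / b 0 * (w (Sum.inl i) * x) := by linarith
      _ = _ := by ring
  · simp only [Sum.elim_inr]
    rw [add_sub_cancel_left] at h2
    calc _ ≤ M * m.real univ * (w (Sum.inr j) * x) := by linarith
      _ = _ := by ring

theorem Core.map_univ (h : Core T L R w ψ b D W) (m : Measure ℝ) :
    (m.map T).real univ = m.real univ := by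
  rw [measureReal_def, Measure.map_apply h.meas MeasurableSet.univ]; simp [measureReal_def]

theorem Core.map_Ioi (h : Core T L R w ψ b D W) (m : Measure ℝ) :
    (m.map T) (Ioi 1) = 0 := by
  rw [Measure.map_apply h.meas measurableSet_Ioi]
  convert measure_empty (μ := m)
  ext x; simpa using (h.maps x).2

theorem Core.good_map (h : Core T L R w ψ b D W) {M : ℝ} (hM : D * M + W / b 0 ≤ M)
    {m : Measure ℝ} (hm : Good M m) : Good M (m.map T) := by
  have := hm.fin
  refine ⟨inferInstance, h.map_Ioi m, ?_, fun x hx => ?_⟩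
  · exact h.conc m hm.ac fun p => hm.conc.subset
      (fun y hy => (h.Lpos p).trans hy.1) (convex_Icc _ _)
  · refine (h.slope hm hx).trans ?_
    rw [h.map_univ]
    exact mul_le_mul_of_nonneg_right
      (mul_le_mul_of_nonneg_right hM measureReal_nonneg) hx

theorem Core.good_iter (h : Core T L R w ψ b D W) {M : ℝ} (hM : D * M + W / b 0 ≤ M)
    {m : Measure ℝ} (hm : Good M m) (n : ℕ) : Good M (m.map T^[n]) := by
  induction n with
  | zero => simpa using hm
  | succ n ih =>
    rw [Function.iterate_succ', ← Measure.map_map h.meas (h.meas.iterate n)]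
    exact h.good_map hM ih

/-- One step splitting. -/
theorem Core.split (h : Core T L R w ψ b D W) {M : ℝ} (hM1 : 1 ≤ M) (hM : D * M + W / b 0 ≤ M - 1)
    (j : ℕ) (hj : b j ≤ 1 / (2 * M)) {m : Measure ℝ} (hm : Good M m) :
    ∃ r : Measure ℝ, IsFiniteMeasure r ∧
      m = ENNReal.ofReal (m.real univ / 2) • lam.restrict (Iic (b j)) + r ∧
      Good M (r.map T) ∧ r.real univ = m.real univ * (1 - b j / 2) := by
  have := hm.fin
  set s := m.real univ with hs
  have hs0 : 0 ≤ s := measureReal_nonneg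
  have hMb : M * b j ≤ 1 / 2 := by
    have := mul_le_mul_of_nonneg_left hj (by linarith : 0 ≤ M)
    calc _ ≤ _ := this
      _ = 1 / 2 := by field_simp
  have hbp := h.b_pos j
  have hb1 : b j < 1 := by nlinarith
  have hk0 := good_restrict (M := 1 / b j) hbp hb1.le (by field_simp; rfl)
  have hk := hk0.1.smul (c := s / 2) (by linarith)
  set k := ENNReal.ofReal (s / 2) • lam.restrict (Iic (b j)) with hkd
  have := hk.fin
  have hkF : ∀ x, 0 ≤ x → F k x = s / 2 * min x (b j) := by
    intro x hx
    rw [hkd, F_smul _ (by linarith)]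
    congr 1
    unfold F
    rw [measureReal_restrict_apply measurableSet_Iic, Iic_inter_Iic]
    change F lam _ = _
    rw [F_lam (le_inf hx hbp.le)]
    exact min_eq_left ((min_le_right _ _).trans hb1.le)
  have hlow : ∀ x y, 0 ≤ x → x ≤ y → y ≤ b j → s / 2 * (y - x) ≤ F m y - F m x := by
    intro x y hx hxy hy
    rcases hxy.eq_or_lt with rfl | hxy
    · simp
    have h1 := hm.conc.slope_anti_adjacent (mem_Ici.2 hx) (mem_Ici.2 zero_le_one) hxy
      (hy.trans_lt hb1)
    rw [F_one hm.supp le_rfl] at h1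
    have h2 := hm.bd y (by linarith)
    have h3 : s / 2 ≤ (s - F m y) / (1 - y) := by
      rw [le_div_iff₀ (by linarith)]
      have : M * s * y ≤ s * (1/2) := by
        calc M * s * y = s * (M * y) := by ring
          _ ≤ s * (1/2) := by
            apply mul_le_mul_of_nonneg_left _ hs0
            nlinarith
      nlinarith
    exact (le_div_iff₀ (by linarith)).1 (h3.trans h1)
  have hle : k ≤ m := by
    refine le_of_F _ _ hk.cont hm.cont fun x y hxy => ?_
    have hmono := F_mono m hxy
    rcases le_total y 0 with hy | hy
    · rw [hk.F_neg hy, hk.F_neg (hxy.trans hy)]; linarith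
    have hpos : ∀ x, 0 ≤ x → x ≤ y → F k y - F k x ≤ F m y - F m x := by
      intro x hx hxy
      have hmono := F_mono m hxy
      rw [hkF x hx, hkF y hy]
      rcases le_total y (b j) with h1 | h1
      · rw [min_eq_left h1, min_eq_left (hxy.trans h1), ← mul_sub]
        exact hlow x y hx hxy h1
      · rw [min_eq_right h1]
        rcases le_total x (b j) with h2 | h2
        · rw [min_eq_left h2, ← mul_sub]
          exact (hlow x _ hx h2 le_rfl).trans (sub_le_sub_right (F_mono m h1) _)
        · rw [min_eq_right h2]; linarith
    rcases le_total x 0 with hx | hx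
    · have := hpos 0 le_rfl hy
      rw [hk.F_neg hx, hm.F_neg hx]
      rwa [hk.F_neg le_rfl, hm.F_neg le_rfl] at this
    · exact hpos x hx hxy
  have hsum : m = k + (m - k) := by rw [add_comm]; exact (Measure.sub_add_cancel_of_le hle).symm
  set r := m - k with hr
  have hrle : r ≤ m := Measure.sub_le
  have hrfin : IsFiniteMeasure r := isFiniteMeasure_of_le m hrle
  have hFr : ∀ x, F r x = F m x - F k x := by
    intro x
    have : F m x = F k x + F r x := by
      conv_lhs => rw [hsum]
      unfold F
      rw [measureReal_add_apply]
    linarith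
  have hrU : r.real univ = s * (1 - b j / 2) := by
    have h1 : m.real univ = k.real univ + r.real univ := by
      conv_lhs => rw [hsum]
      rw [measureReal_add_apply]
    have h2 : k.real univ = s / 2 * b j := by
      rw [hkd]
      simp only [measureReal_ennreal_smul_apply, hk0.2]
      rw [ENNReal.toReal_ofReal (by linarith)]
    rw [h2, ← hs] at h1
    linarith
  have hrac : r ≪ lam := (Measure.absolutelyContinuous_of_le hrle).trans hm.ac
  refine ⟨r, hrfin, hsum, ⟨inferInstance, h.map_Ioi r, ?_, ?_⟩, hrU⟩
  · refine h.conc r hrac fun p => ?_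
    have hmc : ConcaveOn ℝ (Icc (L p) (R p)) (F m) := hm.conc.subset
      (fun y hy => (h.Lpos p).trans hy.1) (convex_Icc _ _)
    rcases h.cut j p with h1 | h1
    · refine ConcaveOn.congr (f := fun x => F m x - s / 2 * x) ?_ fun x hx => ?_
      · refine hmc.sub ?_
        exact ((convexOn_id (convex_Icc _ _)).smul (by linarith : 0 ≤ s / 2))
      · simp only
        rw [hFr, hkF x ((h.Lpos p).trans hx.1), min_eq_left (hx.2.trans h1)]
    · refine ConcaveOn.congr (f := fun x => F m x - s / 2 * b j) ?_ fun x hx => ?_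
      · exact hmc.sub (convexOn_const _ (convex_Icc _ _))
      · simp only
        rw [hFr, hkF x ((h.Lpos p).trans hx.1), min_eq_right (h1.trans hx.1)]
  · intro x hx
    have h1 : F (r.map T) x ≤ F (m.map T) x := by
      unfold F
      rw [measureReal_def, measureReal_def]
      exact ENNReal.toReal_mono (measure_ne_top _ _) (Measure.map_mono hrle h.meas _)
    refine h1.trans ((h.slope hm hx).trans ?_)
    rw [h.map_univ, hrU]
    apply mul_le_mul_of_nonneg_right _ hx
    calc (D * M + W / b 0) * s ≤ (M - 1) * s := mul_le_mul_of_nonneg_right hM hs0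
      _ ≤ M * (1 - b j / 2) * s := mul_le_mul_of_nonneg_right (by nlinarith) hs0
      _ = _ := by ring

theorem Core.contract (h : Core T L R w ψ b D W) {M : ℝ} (hM1 : 1 ≤ M)
    (hM : D * M + W / b 0 ≤ M - 1) (j : ℕ) (hj : b j ≤ 1 / (2 * M)) (A : Set ℝ)
    (hA : MeasurableSet A) (n : ℕ) :
    ∀ m₁ m₂ : Measure ℝ, Good M m₁ → Good M m₂ → m₁.real univ = m₂.real univ →
      |(m₁.map T^[n]).real A - (m₂.map T^[n]).real A| ≤ (1 - b j / 2) ^ n * m₁.real univ := by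
  induction n with
  | zero =>
    intro m₁ m₂ h1 h2 he
    have := h1.fin
    have := h2.fin
    simp only [Function.iterate_zero, Measure.map_id, pow_zero, one_mul]
    have a1 : m₁.real A ≤ m₁.real univ := measureReal_mono (subset_univ _)
    have a2 : m₂.real A ≤ m₂.real univ := measureReal_mono (subset_univ _)
    have a3 : 0 ≤ m₁.real A := measureReal_nonneg
    have a4 : 0 ≤ m₂.real A := measureReal_nonneg
    rw [abs_le]; constructor <;> linarith
  | succ n ih =>
    intro m₁ m₂ h1 h2 he
    obtain ⟨r₁, f1, e1, g1, u1⟩ := h.split hM1 hM j hj h1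
    obtain ⟨r₂, f2, e2, g2, u2⟩ := h.split hM1 hM j hj h2
    rw [← he] at e2 u2
    have hT := h.meas
    have hTn := h.meas.iterate n
    have hTs := h.meas.iterate (n + 1)
    have key : ∀ (k r : Measure ℝ) [IsFiniteMeasure k] [IsFiniteMeasure r],
        ((k + r).map T^[n+1]).real A = (k.map T^[n+1]).real A + ((r.map T).map T^[n]).real A := by
      intro k r _ _
      rw [Measure.map_add _ _ hTs, measureReal_add_apply, Measure.map_map hTn hT,
        ← Function.iterate_succ]
    have hfin : IsFiniteMeasure (ENNReal.ofReal (m₁.real univ / 2) • lam.restrict (Iic (b j))) :=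
      ⟨by simp [ENNReal.mul_lt_top_iff]⟩
    have k1 := key (ENNReal.ofReal (m₁.real univ / 2) • lam.restrict (Iic (b j))) r₁
    have k2 := key (ENNReal.ofReal (m₁.real univ / 2) • lam.restrict (Iic (b j))) r₂
    rw [← e1] at k1
    rw [← e2] at k2
    rw [k1, k2, add_sub_add_left_eq_sub]
    refine (ih _ _ g1 g2 ?_).trans (le_of_eq ?_)
    · rw [h.map_univ, h.map_univ, u1, u2]
    · rw [h.map_univ, u1]; ring

end

theorem Good.density {M : ℝ} {m : Measure ℝ} (h : Good M m) :
    ∃ f : ℝ → ℝ, Integrable f lam ∧ (∀ x, 0 ≤ f x) ∧ AntitoneOn f (Icc 0 1) ∧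
      m = lam.withDensity (fun x => ENNReal.ofReal (f x)) := by
  have := h.fin
  set K := M * m.real univ with hK
  have hK0 := h.K_nonneg
  have hcv : ConvexOn ℝ (Ici 0) (-(F m)) := h.conc.neg
  have hder : ∀ x, 0 < x → HasDerivWithinAt (F m) (-derivWithin (-(F m)) (Ioi x) x) (Ioi x) x := by
    intro x hx
    have := (hcv.hasDerivWithinAt_rightDeriv_of_mem_interior (x := x) (by simpa using hx)).neg
    simpa using this
  have hbds : ∀ x, 0 < x → 0 ≤ -derivWithin (-(F m)) (Ioi x) x ∧
      -derivWithin (-(F m)) (Ioi x) x ≤ K := by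
    intro x hx
    have h1 := (hasDerivWithinAt_iff_tendsto_slope' (by simp)).1 (hder x hx)
    constructor
    · refine ge_of_tendsto h1 ?_
      filter_upwards [self_mem_nhdsWithin] with y hy
      rw [slope_def_field]
      exact div_nonneg (sub_nonneg.2 (F_mono m (le_of_lt hy))) (sub_nonneg.2 (le_of_lt hy))
    · refine le_of_tendsto h1 ?_
      filter_upwards [self_mem_nhdsWithin] with y hy
      rw [slope_def_field, div_le_iff₀ (sub_pos.2 hy)]
      exact h.lip (le_of_lt hy)
  let f : ℝ → ℝ := fun x => if 0 < x then -derivWithin (-(F m)) (Ioi x) x else K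
  have hf0 : ∀ x, 0 ≤ f x := by
    intro x
    by_cases hx : 0 < x
    · simpa [f, hx] using (hbds x hx).1
    · simpa [f, hx] using hK0
  have hanti : AntitoneOn f (Ici 0) := by
    intro x hx y hy hxy
    by_cases hx' : 0 < x
    · have hy' := hx'.trans_le hxy
      have := hcv.monotoneOn_rightDeriv (a := x) (b := y) (by simpa using hx')
        (by simpa using hy') hxy
      simp only [f, hx', hy', if_true]
      exact neg_le_neg this
    · by_cases hy' : 0 < y
      · simp only [f, hx', hy', if_true, if_false]
        exact (hbds y hy').2
      · simp [f, hx', hy']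
  have hanti1 : AntitoneOn f (Icc 0 1) := hanti.mono Icc_subset_Ici_self
  have hfint : Integrable f lam := hanti1.integrableOn_isCompact isCompact_Icc
  refine ⟨f, hfint, hf0, hanti1, ?_⟩
  have hfin : IsFiniteMeasure (lam.withDensity (fun x => ENNReal.ofReal (f x))) :=
    isFiniteMeasure_withDensity_ofReal hfint.2
  refine Measure.ext_of_Iic _ _ fun x => ?_
  rw [withDensity_apply _ measurableSet_Iic, ← ofReal_measureReal]
  change ENNReal.ofReal (F m x) = _
  have hres : lam.restrict (Iic x) = volume.restrict (Iic x ∩ Icc 0 1) := by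
    unfold lam; rw [Measure.restrict_restrict measurableSet_Iic]
  rcases lt_or_ge x 0 with hx | hx
  · have : Iic x ∩ Icc (0:ℝ) 1 = ∅ := by
      ext y; simp; intro h1 h2; linarith
    rw [hres, this, h.F_neg hx.le]; simp
  · have hset : Iic x ∩ Icc (0:ℝ) 1 = Icc 0 (min x 1) := by ext; simp; tauto
    have hy0 : 0 ≤ min x 1 := le_min hx zero_le_one
    have hFy : F m x = F m (min x 1) := by
      rcases le_total x 1 with h1 | h1
      · rw [min_eq_left h1]
      · rw [min_eq_right h1, F_one h.supp h1, F_one h.supp le_rfl]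
    rw [hres, hset, hFy]
    set y := min x 1
    have hii : IntervalIntegrable f volume 0 y := by
      refine AntitoneOn.intervalIntegrable ?_
      rw [uIcc_of_le hy0]
      exact hanti.mono Icc_subset_Ici_self
    have hFTC := intervalIntegral.integral_eq_sub_of_hasDeriv_right_of_le hy0 h.cont.continuousOn
      (f' := f) (fun z hz => by simpa [f, hz.1] using hder z hz.1) hii
    rw [h.F_neg le_rfl, sub_zero, intervalIntegral.integral_of_le hy0,
      ← integral_Icc_eq_integral_Ioc] at hFTC
    rw [← hFTC, ofReal_integral_eq_lintegral_ofReal]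
    · exact (intervalIntegrable_iff_integrableOn_Icc_of_le hy0).1 hii
    · exact Eventually.of_forall hf0

theorem hasSum_real {m : Measure ℝ} [IsFiniteMeasure m] {f : ℕ → Set ℝ}
    (hf : ∀ i, MeasurableSet (f i)) (hd : Pairwise (Function.onFun Disjoint f)) :
    HasSum (fun i => m.real (f i)) (m.real (⋃ i, f i)) := by
  have h1 : Summable fun i => m.real (f i) := summable_measure_toReal hf hd
  have h2 : m.real (⋃ i, f i) = ∑' i, m.real (f i) := by
    rw [measureReal_def, measure_iUnion hd hf, ENNReal.tsum_toReal_eq (fun i => measure_ne_top _ _)]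
    rfl
  rw [h2]; exact h1.hasSum

section
variable {T : ℝ → ℝ} {L R w : ℕ ⊕ ℕ → ℝ} {ψ : ℕ ⊕ ℕ → ℝ → ℝ} {b : ℕ → ℝ} {D W : ℝ}

theorem Core.rate (h : Core T L R w ψ b D W) {M : ℝ} (hM1 : 1 ≤ M)
    (hM : D * M + W / b 0 ≤ M - 1) : ∃ ρ : ℝ, 0 ≤ ρ ∧ ρ < 1 ∧ ∀ A : Set ℝ, MeasurableSet A →
    ∀ n : ℕ, ∀ m₁ m₂ : Measure ℝ, Good M m₁ → Good M m₂ → m₁.real univ = m₂.real univ →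
      |(m₁.map T^[n]).real A - (m₂.map T^[n]).real A| ≤ ρ ^ n * m₁.real univ := by
  obtain ⟨j, hj⟩ := (h.b_lim.eventually_lt_const (show (0:ℝ) < 1 / (2 * M) by positivity)).exists
  have h1 : 1 / (2 * M) ≤ 1 := by rw [div_le_one (by positivity)]; linarith
  have := h.b_pos j
  exact ⟨1 - b j / 2, by linarith, by linarith, fun A hA n => h.contract hM1 hM j hj.le A hA n⟩

theorem Core.M_ok (h : Core T L R w ψ b D W) : ∃ M₀ : ℝ, 1 ≤ M₀ ∧
    ∀ M, M₀ ≤ M → D * M + W / b 0 ≤ M - 1 := by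
  refine ⟨max 1 ((W / b 0 + 1) / (1 - D)), le_max_left _ _, fun M hM => ?_⟩
  have h1 := (le_max_right _ _).trans hM
  rw [div_le_iff₀ (by linarith [h.D_lt])] at h1
  linarith

theorem Core.limit (h : Core T L R w ψ b D W) : ∃ μ : Measure ℝ, ∃ M : ℝ, Good M μ ∧
    μ.real univ = 1 ∧
    ∀ A, MeasurableSet A → Tendsto (fun n => (lam.map T^[n]).real A) atTop (nhds (μ.real A)) := by
  obtain ⟨M, hM1, hM⟩ := h.M_ok
  have hM := hM M le_rfl
  obtain ⟨ρ, hρ0, hρ1, hρ⟩ := h.rate hM1 hM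
  have hg := good_lam hM1
  have hgn : ∀ n, Good M (lam.map T^[n]) := h.good_iter (by linarith) hg
  have hun : ∀ n, (lam.map T^[n]).real univ = 1 := by
    intro n
    rw [measureReal_def, Measure.map_apply (h.meas.iterate n) MeasurableSet.univ, preimage_univ]
    exact lam_univ
  have hex : ∀ A, MeasurableSet A → ∃ l, Tendsto (fun n => (lam.map T^[n]).real A) atTop
      (nhds l) := by
    intro A hA
    refine cauchySeq_tendsto_of_complete (cauchySeq_of_le_geometric ρ 1 hρ1 fun n => ?_)
    have := hρ A hA n lam (lam.map T) hg (h.good_map (by linarith) hg) (h.map_univ lam).symm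
    rw [Measure.map_map (h.meas.iterate n) h.meas, ← Function.iterate_succ, lam_univ] at this
    rw [Real.dist_eq]; linarith
  choose! l hl using hex
  have hl0 : ∀ A, MeasurableSet A → 0 ≤ l A := fun A hA =>
    ge_of_tendsto' (hl A hA) fun n => measureReal_nonneg
  have hle : ∀ n A, (lam.map T^[n]).real A ≤ M * lam.real A := by
    intro n A
    have h1 := (hgn n).le_lam A
    rw [hun n, mul_one] at h1
    rw [measureReal_def, measureReal_def]
    have h2 := ENNReal.toReal_mono (by
      simp [ENNReal.mul_eq_top]) h1
    simpa [ENNReal.toReal_ofReal (by linarith : 0 ≤ M)] using h2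
  have hlU : l univ = 1 := by
    refine tendsto_nhds_unique (hl univ MeasurableSet.univ) ?_
    simp [hun]
  let μ : Measure ℝ := Measure.ofMeasurable (fun A _ => ENNReal.ofReal (l A)) (by
      have : l ∅ = 0 := by
        refine tendsto_nhds_unique (hl ∅ MeasurableSet.empty) ?_
        simp
      simp [this]) (by
      intro f hf hd
      have hsum : HasSum (fun i => M * lam.real (f i)) (M * lam.real (⋃ i, f i)) :=
        (hasSum_real hf hd).mul_left M
      have hls : Summable fun i => l (f i) := by
        refine Summable.of_nonneg_of_le (fun i => hl0 _ (hf i)) (fun i => ?_) hsum.summable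
        exact le_of_tendsto' (hl _ (hf i)) fun n => hle n _
      rw [← ENNReal.ofReal_tsum_of_nonneg (fun i => hl0 _ (hf i)) hls]
      congr 1
      have h1 := tendsto_tsum_of_dominated_convergence (𝓕 := atTop)
        (f := fun n i => (lam.map T^[n]).real (f i)) (g := fun i => l (f i)) hsum.summable
        (fun i => hl _ (hf i)) (Eventually.of_forall fun n i => by
          rw [Real.norm_of_nonneg measureReal_nonneg]; exact hle n _)
      refine tendsto_nhds_unique (hl _ (MeasurableSet.iUnion hf)) ?_
      refine h1.congr fun n => ?_
      have := (hgn n).fin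
      exact (hasSum_real hf hd).tsum_eq)
  have hμ : ∀ A, MeasurableSet A → μ A = ENNReal.ofReal (l A) := fun A hA =>
    Measure.ofMeasurable_apply A hA
  have hμr : ∀ A, MeasurableSet A → μ.real A = l A := fun A hA => by
    rw [measureReal_def, hμ A hA, ENNReal.toReal_ofReal (hl0 A hA)]
  have hlim : ∀ A, MeasurableSet A → Tendsto (fun n => (lam.map T^[n]).real A) atTop
      (nhds (μ.real A)) := fun A hA => by rw [hμr A hA]; exact hl A hA
  have hU : μ.real univ = 1 := by rw [hμr _ MeasurableSet.univ, hlU]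
  have hFl : ∀ x, Tendsto (fun n => F (lam.map T^[n]) x) atTop (nhds (F μ x)) :=
    fun x => hlim _ measurableSet_Iic
  refine ⟨μ, M, ⟨⟨?_⟩, ?_, ⟨convex_Ici 0, ?_⟩, ?_⟩, hU, hlim⟩
  · rw [hμ _ MeasurableSet.univ]; exact ENNReal.ofReal_lt_top
  · rw [hμ _ measurableSet_Ioi, ENNReal.ofReal_eq_zero]
    refine le_of_tendsto' (hl _ measurableSet_Ioi) fun n => ?_
    simp [measureReal_def, (hgn n).supp]
  · intro x hx y hy α β hα hβ hαβ
    refine le_of_tendsto_of_tendsto' (((hFl x).const_mul α).add ((hFl y).const_mul β))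
      (hFl (α • x + β • y)) fun n => ?_
    exact (hgn n).conc.2 hx hy hα hβ hαβ
  · intro x hx
    refine le_of_tendsto' (hFl x) fun n => ?_
    rw [hU, ← hun n]
    exact (hgn n).bd x hx

theorem Core.mixing (h : Core T L R w ψ b D W) {μ : Measure ℝ}
    (hμ : ∀ A, MeasurableSet A → Tendsto (fun n => (lam.map T^[n]).real A) atTop (nhds (μ.real A)))
    {A : Set ℝ} (hA : MeasurableSet A) (s : Set ℝ) (hs : MeasurableSet s) :
    Tendsto (fun n => lam.real (s ∩ T^[n] ⁻¹' A)) atTop (nhds (lam.real s * μ.real A)) := by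
  have hB : ∀ n, MeasurableSet (T^[n] ⁻¹' A) := fun n => h.meas.iterate n hA
  have hμ' : Tendsto (fun n => lam.real (T^[n] ⁻¹' A)) atTop (nhds (μ.real A)) := by
    refine (hμ A hA).congr fun n => ?_
    rw [measureReal_def, Measure.map_apply (h.meas.iterate n) hA]; rfl
  induction s, hs using MeasurableSpace.induction_on_inter (borel_eq_generateFrom_Iic ℝ)
    isPiSystem_Iic with
  | empty => simp
  | basic t ht =>
    obtain ⟨t, rfl⟩ := ht
    rcases le_or_gt t 0 with ht0 | ht0
    · have h0 : lam.real (Iic t) = 0 := F_lam_neg ht0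
      rw [h0, zero_mul]
      refine tendsto_const_nhds.congr fun n => (le_antisymm ?_ measureReal_nonneg).symm
      rw [← h0]
      exact measureReal_mono inter_subset_left
    rcases le_total t 1 with ht1 | ht1
    · have ht' : lam.real (Iic t) = t := by
        change F lam t = t
        rw [F_lam ht0.le, min_eq_left ht1]
      rw [ht']
      obtain ⟨M₀, hM1, hM⟩ := h.M_ok
      let M := max M₀ (1 / t)
      have hMt : 1 ≤ M * t := by
        have : 1 / t ≤ M := le_max_right _ _
        exact (div_le_iff₀ ht0).1 this
      have hM1 : 1 ≤ M := hM1.trans (le_max_left _ _)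
      obtain ⟨ρ, hρ0, hρ1, hρ⟩ := h.rate hM1 (hM M (le_max_left _ _))
      obtain ⟨hg, hu⟩ := good_restrict ht0 ht1 hMt
      have hg2 := (good_lam hM1).smul ht0.le
      have hu2 : (ENNReal.ofReal t • lam).real univ = t := by
        simp [lam_univ, ht0.le]
      have key : ∀ n, |lam.real (Iic t ∩ T^[n] ⁻¹' A) - t * lam.real (T^[n] ⁻¹' A)|
          ≤ ρ ^ n * t := by
        intro n
        have := hρ A hA n _ _ hg hg2 (hu.trans hu2.symm)
        rw [hu] at this
        convert this using 3
        · rw [measureReal_def, measureReal_def, Measure.map_apply (h.meas.iterate n) hA,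
            Measure.restrict_apply (hB n), inter_comm]
        · rw [measureReal_def, measureReal_def, Measure.map_apply (h.meas.iterate n) hA]
          simp [ht0.le]
      have h0 : Tendsto (fun n => ρ ^ n * t) atTop (nhds 0) := by
        simpa using (tendsto_pow_atTop_nhds_zero_of_lt_one hρ0 hρ1).mul_const t
      have h1 := squeeze_zero_norm (fun n => (Real.norm_eq_abs _).trans_le (key n)) h0
      have h2 := h1.add (hμ'.const_mul t)
      simpa using h2
    · have : ∀ B, lam.real (Iic t ∩ B) = lam.real B := by
        intro B
        have h2 : lam.restrict (Iic t) = lam := by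
          unfold lam
          rw [Measure.restrict_restrict measurableSet_Iic]
          congr 1; ext x; simp; intro _ h4; linarith
        conv_rhs => rw [← h2]
        rw [measureReal_def, measureReal_def, Measure.restrict_apply' measurableSet_Iic, inter_comm]
      have h3 : lam.real (Iic t) = 1 := by
        rw [← inter_univ (Iic t), this, lam_univ]
      simp_rw [this, h3, one_mul]
      exact hμ'
  | compl t htm ih =>
    have h1 : ∀ B, MeasurableSet B → lam.real (tᶜ ∩ B) = lam.real B - lam.real (t ∩ B) := by
      intro B hB
      have := measureReal_inter_add_sdiff (μ := lam) (s := B) htm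
      rw [inter_comm t, inter_comm tᶜ, ← Set.sdiff_eq]; linarith
    have h2 := h1 univ MeasurableSet.univ
    rw [inter_univ, inter_univ, lam_univ] at h2
    rw [h2, sub_mul, one_mul]
    refine (hμ'.sub ih).congr fun n => (h1 _ (hB n)).symm
  | iUnion f hd hf ih =>
    have h1 := tendsto_tsum_of_dominated_convergence (𝓕 := atTop)
        (f := fun n i => lam.real (f i ∩ T^[n] ⁻¹' A)) (hasSum_real hf hd).summable
        (fun i => ih i) (Eventually.of_forall fun n i => by
          rw [Real.norm_of_nonneg measureReal_nonneg]; exact measureReal_mono inter_subset_left)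
    rw [((hasSum_real hf hd).mul_right (μ.real A)).tsum_eq] at h1
    refine h1.congr fun n => ?_
    rw [iUnion_inter]
    exact (hasSum_real (fun i => (hf i).inter (hB n)) fun i j hij =>
      (hd hij).mono inter_subset_left inter_subset_left).tsum_eq

theorem Core.mixing_int (h : Core T L R w ψ b D W) {μ : Measure ℝ} [IsFiniteMeasure μ]
    (hμ : ∀ A, MeasurableSet A → Tendsto (fun n => (lam.map T^[n]).real A) atTop (nhds (μ.real A)))
    {A : Set ℝ} (hA : MeasurableSet A) {g : ℝ → ℝ} (hg : Integrable g lam) :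
    Tendsto (fun n => ∫ x in T^[n] ⁻¹' A, g x ∂lam) atTop
      (nhds ((∫ x, g x ∂lam) * μ.real A)) := by
  have hB : ∀ n, MeasurableSet (T^[n] ⁻¹' A) := fun n => h.meas.iterate n hA
  refine Integrable.induction (μ := lam) (fun g : ℝ → ℝ =>
    Tendsto (fun n => ∫ x in T^[n] ⁻¹' A, g x ∂lam) atTop (nhds ((∫ x, g x ∂lam) * μ.real A)))
    ?_ ?_ ?_ ?_ hg
  · intro c s hs _
    have := (h.mixing hμ hA s hs).const_mul c
    refine (this.congr fun n => ?_).trans_eq ?_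
    · rw [setIntegral_indicator hs, setIntegral_const, inter_comm, smul_eq_mul, mul_comm]
    · rw [integral_indicator hs, setIntegral_const, smul_eq_mul]
      congr 1; ring
  · intro f g _ hf hg h1 h2
    have := h1.add h2
    simp only [Pi.add_apply]
    rw [integral_add hf hg, add_mul]
    refine this.congr fun n => ?_
    rw [integral_add hf.integrableOn hg.integrableOn]
  · rw [← isSeqClosed_iff_isClosed]
    intro u v hu huv
    simp only [mem_ofPred_eq] at hu ⊢
    rw [Metric.tendsto_atTop]
    intro ε hε
    set C := μ.real A with hC
    have hC0 : 0 ≤ C := measureReal_nonneg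
    obtain ⟨k, hk⟩ := ((tendsto_iff_dist_tendsto_zero.1 huv).eventually_lt_const
      (show 0 < ε / (3 * (C + 1)) by positivity)).exists
    have hd : ∀ s, MeasurableSet s → |∫ x in s, u k x ∂lam - ∫ x in s, v x ∂lam| ≤
        dist (u k) v := by
      intro s hs
      rw [← integral_sub (L1.integrable_coeFn _).integrableOn (L1.integrable_coeFn _).integrableOn,
        L1.dist_eq_integral_dist]
      calc |∫ x in s, (u k x - v x) ∂lam| ≤ ∫ x in s, |u k x - v x| ∂lam :=
            abs_integral_le_integral_abs
        _ ≤ ∫ x, |u k x - v x| ∂lam := by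
            refine setIntegral_le_integral ?_ (Eventually.of_forall fun x => abs_nonneg _)
            exact ((L1.integrable_coeFn _).sub (L1.integrable_coeFn _)).abs
        _ = _ := rfl
    have hd0 := hd univ MeasurableSet.univ
    simp only [Measure.restrict_univ] at hd0
    obtain ⟨N, hN⟩ := (Metric.tendsto_atTop.1 (hu k)) (ε / 3) (by positivity)
    refine ⟨N, fun n hn => ?_⟩
    have h1 := hN n hn
    have h2 := hd _ (hB n)
    rw [Real.dist_eq] at h1 ⊢
    set d := dist (u k) v
    have h3 : d * (C + 1) < ε / 3 := by
      have := (lt_div_iff₀ (by positivity)).1 hk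
      linarith
    have hd00 : 0 ≤ d := dist_nonneg
    have h4 : |(∫ x, u k x ∂lam) * C - (∫ x, v x ∂lam) * C| ≤ d * C := by
      rw [← sub_mul, abs_mul, abs_of_nonneg hC0]
      exact mul_le_mul_of_nonneg_right hd0 hC0
    rw [abs_le] at h2 h4
    rw [abs_lt] at h1 ⊢
    constructor <;> nlinarith
  · intro f g hfg hf h1
    rw [← integral_congr_ae hfg]
    refine h1.congr fun n => ?_
    exact integral_congr_ae (ae_restrict_of_ae hfg)

theorem Core.unique (h : Core T L R w ψ b D W) {μ : Measure ℝ} [IsFiniteMeasure μ]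
    (hμ : ∀ A, MeasurableSet A → Tendsto (fun n => (lam.map T^[n]).real A) atTop (nhds (μ.real A)))
    (ν : Measure ℝ) [IsProbabilityMeasure ν] (hν : ν ≪ lam) (hinv : ν.map T = ν) : ν = μ := by
  ext A hA
  have hn : ∀ n, ν.map T^[n] = ν := by
    intro n
    induction n with
    | zero => simp
    | succ n ih =>
      rw [Function.iterate_succ, ← Measure.map_map (h.meas.iterate n) h.meas, hinv, ih]
  have h1 := h.mixing_int hμ hA (g := fun x => (ν.rnDeriv lam x).toReal)
    Measure.integrable_toReal_rnDeriv
  rw [Measure.integral_toReal_rnDeriv hν] at h1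
  have h2 : ∀ n, ∫ x in T^[n] ⁻¹' A, (ν.rnDeriv lam x).toReal ∂lam = ν.real A := by
    intro n
    rw [Measure.setIntegral_toReal_rnDeriv hν]
    conv_rhs => rw [← hn n]
    rw [measureReal_def, measureReal_def, Measure.map_apply (h.meas.iterate n) hA]
  simp_rw [h2] at h1
  have h3 := tendsto_nhds_unique h1 tendsto_const_nhds
  rw [probReal_univ, one_mul] at h3
  rw [← ofReal_measureReal, ← ofReal_measureReal (μ := μ), h3]

theorem Core.inv (h : Core T L R w ψ b D W) {μ : Measure ℝ} [IsFiniteMeasure μ]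
    (hμ : ∀ A, MeasurableSet A → Tendsto (fun n => (lam.map T^[n]).real A) atTop
      (nhds (μ.real A))) : μ.map T = μ := by
  ext A hA
  rw [Measure.map_apply h.meas hA]
  have h1 := hμ _ (h.meas hA)
  have h2 := (tendsto_add_atTop_iff_nat 1).2 (hμ A hA)
  have h3 : μ.real (T ⁻¹' A) = μ.real A := by
    refine tendsto_nhds_unique h1 (h2.congr fun n => ?_)
    rw [Function.iterate_succ', ← Measure.map_map h.meas (h.meas.iterate n), measureReal_def,
      measureReal_def, Measure.map_apply h.meas hA]
  rw [← ofReal_measureReal, ← ofReal_measureReal (μ := μ) (s := A), h3]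

end

/-- left endpoints -/
abbrev LL (a b : ℕ → ℝ) : ℕ ⊕ ℕ → ℝ := Sum.elim a b

/-- sublevel sets in the branches -/
def SS (τ : ℝ → ℝ) (L R : ℕ ⊕ ℕ → ℝ) (p : ℕ ⊕ ℕ) (x : ℝ) : Set ℝ :=
  {y | y ∈ Ico (L p) (R p) ∧ τ y ≤ x}

open Classical in
/-- measurable version of the map -/
def TT (τ : ℝ → ℝ) (L R : ℕ ⊕ ℕ → ℝ) (x : ℝ) : ℝ :=
  if x ∈ ⋃ p, Ico (L p) (R p) then τ x else 0

/-- inverse branches -/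
def PSI (τ : ℝ → ℝ) (L R : ℕ ⊕ ℕ → ℝ) (p : ℕ ⊕ ℕ) (x : ℝ) : ℝ := sSup (SS τ L R p x)

/-- Uniform description of branches. -/
structure Br (τ : ℝ → ℝ) (L R w : ℕ ⊕ ℕ → ℝ) : Prop where
  maps : MapsTo τ (Icc 0 1) (Icc 0 1)
  Lpos : ∀ p, 0 ≤ L p
  lt : ∀ p, L p < R p
  R_le : ∀ p, R p ≤ 1
  disj : Pairwise (Function.onFun Disjoint fun p => Ico (L p) (R p))
  conv : ∀ p, ConvexOn ℝ (Ico (L p) (R p)) τ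
  zero : ∀ p, τ (L p) = 0
  w_nonneg : ∀ p, 0 ≤ w p
  slope : ∀ p, ∀ y ∈ Ico (L p) (R p), y - L p ≤ w p * τ y
  cover : lam (⋃ p, Ico (L p) (R p))ᶜ = 0

theorem Br.sub {τ L R w} (h : Br τ L R w) (p : ℕ ⊕ ℕ) : Ico (L p) (R p) ⊆ Icc 0 1 :=
  fun _ hy => ⟨(h.Lpos p).trans hy.1, hy.2.le.trans (h.R_le p)⟩

theorem Br.SS_conv {τ L R w} (h : Br τ L R w) (p : ℕ ⊕ ℕ) (x : ℝ) :
    (SS τ L R p x).OrdConnected := ((h.conv p).convex_le x).ordConnected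

theorem Br.SS_meas {τ L R w} (h : Br τ L R w) (p : ℕ ⊕ ℕ) (x : ℝ) :
    MeasurableSet (SS τ L R p x) := (h.SS_conv p x).measurableSet

theorem Br.L_mem {τ L R w} (h : Br τ L R w) (p : ℕ ⊕ ℕ) {x : ℝ} (hx : 0 ≤ x) :
    L p ∈ SS τ L R p x := ⟨⟨le_rfl, h.lt p⟩, by rw [h.zero p]; exact hx⟩

theorem SS_bdd (τ L R) (p : ℕ ⊕ ℕ) (x : ℝ) : BddAbove (SS τ L R p x) :=
  ⟨R p, fun _ hy => hy.1.2.le⟩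

theorem Br.TT_pre {τ L R w} (h : Br τ L R w) {x : ℝ} (hx : 0 ≤ x) :
    TT τ L R ⁻¹' Iic x = (⋃ p, SS τ L R p x) ∪ (⋃ p, Ico (L p) (R p))ᶜ := by
  ext y
  by_cases hy : y ∈ ⋃ p, Ico (L p) (R p)
  · have : y ∈ TT τ L R ⁻¹' Iic x ↔ τ y ≤ x := by simp [TT, -mem_iUnion, hy]
    rw [this]
    constructor
    · intro h1
      obtain ⟨p, hp⟩ := mem_iUnion.1 hy
      exact Or.inl (mem_iUnion.2 ⟨p, hp, h1⟩)
    · rintro (h1 | h1)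
      · obtain ⟨p, hp⟩ := mem_iUnion.1 h1
        exact hp.2
      · exact absurd hy h1
  · have : y ∈ TT τ L R ⁻¹' Iic x := by simpa [TT, -mem_iUnion, hy] using hx
    exact ⟨fun _ => Or.inr hy, fun _ => this⟩

theorem Br.TT_maps {τ L R w} (h : Br τ L R w) (x : ℝ) : TT τ L R x ∈ Icc (0:ℝ) 1 := by
  unfold TT
  split_ifs with hx
  · obtain ⟨p, hp⟩ := mem_iUnion.1 hx
    exact h.maps (h.sub p hp)
  · simp

theorem Br.TT_meas {τ L R w} (h : Br τ L R w) : Measurable (TT τ L R) := by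
  refine measurable_of_Iic fun x => ?_
  rcases lt_or_ge x 0 with hx | hx
  · convert MeasurableSet.empty
    ext y
    simp only [mem_preimage, mem_Iic, mem_empty_iff_false, iff_false, not_le]
    exact hx.trans_le (h.TT_maps y).1
  · rw [h.TT_pre hx]
    exact (MeasurableSet.iUnion fun p => h.SS_meas p x).union
      (MeasurableSet.iUnion fun p => measurableSet_Ico).compl

theorem Br.PSI_mem {τ L R w} (h : Br τ L R w) (p : ℕ ⊕ ℕ) {x : ℝ} (hx : 0 ≤ x) :
    PSI τ L R p x ∈ Icc (L p) (R p) :=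
  ⟨le_csSup (SS_bdd τ L R p x) (h.L_mem p hx), csSup_le ⟨_, h.L_mem p hx⟩ fun _ hy => hy.1.2.le⟩

theorem Br.SS_real {τ L R w} (h : Br τ L R w) (p : ℕ ⊕ ℕ) {x : ℝ} (hx : 0 ≤ x)
    (m : Measure ℝ) [IsFiniteMeasure m] (hm : m ≪ lam) :
    m.real (SS τ L R p x) = F m (PSI τ L R p x) - F m (L p) := by
  have hna : NullSingletonClass m := ⟨fun y => hm (by simp [lam])⟩
  rw [← F_Ioc m (h.PSI_mem p hx).1]
  refine le_antisymm ?_ ?_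
  · rw [measureReal_congr (Ioc_ae_eq_Icc (μ := m))]
    exact measureReal_mono fun y hy => ⟨hy.1.1, le_csSup (SS_bdd τ L R p x) hy⟩
  · rw [measureReal_congr (Ioo_ae_eq_Ioc (μ := m)).symm]
    refine measureReal_mono fun y hy => ?_
    obtain ⟨z, hz, hyz⟩ := exists_lt_of_lt_csSup ⟨_, h.L_mem p hx⟩ hy.2
    exact (h.SS_conv p x).out (h.L_mem p hx) hz ⟨hy.1.le, hyz.le⟩

theorem Br.cdf {τ L R w} (h : Br τ L R w) (m : Measure ℝ) [IsFiniteMeasure m] (hm : m ≪ lam)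
    {x : ℝ} (hx : 0 ≤ x) :
    HasSum (fun p => F m (PSI τ L R p x) - F m (L p)) (F (m.map (TT τ L R)) x) := by
  have hd : Pairwise (Function.onFun Disjoint fun p => SS τ L R p x) := fun p q hpq =>
    (h.disj hpq).mono (fun _ hy => hy.1) (fun _ hy => hy.1)
  have h1 : (m.map (TT τ L R)) (Iic x) = ∑' p, m (SS τ L R p x) := by
    rw [Measure.map_apply h.TT_meas measurableSet_Iic, h.TT_pre hx,
      ← measure_iUnion hd (fun p => h.SS_meas p x)]
    exact le_antisymm ((measure_union_le _ _).trans (by rw [hm h.cover, add_zero]))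
      (measure_mono subset_union_left)
  have hne : ∑' p, m (SS τ L R p x) ≠ ⊤ := by rw [← h1]; exact measure_ne_top _ _
  have h2 : F (m.map (TT τ L R)) x = ∑' p, m.real (SS τ L R p x) := by
    unfold F
    rw [measureReal_def, h1, ENNReal.tsum_toReal_eq (fun i => measure_ne_top _ _)]
    rfl
  have h3 : Summable fun p => m.real (SS τ L R p x) := ENNReal.summable_toReal hne
  have h4 : (fun p => F m (PSI τ L R p x) - F m (L p)) = fun p => m.real (SS τ L R p x) :=
    funext fun p => (h.SS_real p hx m hm).symm
  rw [h2, h4]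
  exact h3.hasSum

theorem Br.PSI_conc {τ L R w} (h : Br τ L R w) (p : ℕ ⊕ ℕ) :
    ConcaveOn ℝ (Ici 0) (PSI τ L R p) := by
  refine ⟨convex_Ici 0, fun x hx y hy α β hα hβ hαβ => ?_⟩
  have key : ∀ u ∈ SS τ L R p x, ∀ v ∈ SS τ L R p y,
      α * u + β * v ≤ PSI τ L R p (α • x + β • y) := by
    intro u hu v hv
    refine le_csSup (SS_bdd _ _ _ _ _) ⟨(h.conv p).1 hu.1 hv.1 hα hβ hαβ, ?_⟩
    refine ((h.conv p).2 hu.1 hv.1 hα hβ hαβ).trans ?_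
    simp only [smul_eq_mul]
    exact add_le_add (mul_le_mul_of_nonneg_left hu.2 hα) (mul_le_mul_of_nonneg_left hv.2 hβ)
  have h1 : ∀ v ∈ SS τ L R p y, α * PSI τ L R p x + β * v ≤ PSI τ L R p (α • x + β • y) := by
    intro v hv
    rcases hα.eq_or_lt with h0 | h0
    · have := key _ (h.L_mem p hx) v hv
      rw [← h0] at this ⊢
      simpa using this
    · have : PSI τ L R p x ≤ (PSI τ L R p (α • x + β • y) - β * v) / α := by
        refine csSup_le ⟨_, h.L_mem p hx⟩ fun u hu => ?_
        rw [le_div_iff₀ h0]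
        linarith [key u hu v hv]
      rw [le_div_iff₀ h0] at this
      linarith
  simp only [smul_eq_mul] at *
  rcases hβ.eq_or_lt with h0 | h0
  · have := h1 _ (h.L_mem p hy)
    rw [← h0] at this ⊢
    simpa using this
  · have : PSI τ L R p y ≤ (PSI τ L R p (α * x + β * y) - α * PSI τ L R p x) / β := by
      refine csSup_le ⟨_, h.L_mem p hy⟩ fun v hv => ?_
      rw [le_div_iff₀ h0]
      linarith [h1 v hv]
    rw [le_div_iff₀ h0] at this
    linarith

theorem Br.PSI_le {τ L R w} (h : Br τ L R w) (p : ℕ ⊕ ℕ) {x : ℝ} (hx : 0 ≤ x) :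
    PSI τ L R p x ≤ L p + w p * x := by
  refine csSup_le ⟨_, h.L_mem p hx⟩ fun y hy => ?_
  have h1 := h.slope p y hy.1
  have h2 := mul_le_mul_of_nonneg_left hy.2 (h.w_nonneg p)
  linarith

theorem slope_aux {τ : ℝ → ℝ} {l r s : ℝ} (hc : ConvexOn ℝ (Ico l r) τ) (h0 : τ l = 0)
    (hd : HasDerivWithinAt τ s (Ici l) l) (hs : 0 < s) :
    ∀ y ∈ Ico l r, y - l ≤ 1 / s * τ y := by
  intro y hy
  rcases hy.1.eq_or_lt with rfl | hly
  · simp [h0]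
  have h1 := hc.le_slope_of_hasDerivWithinAt_Ioi ⟨le_rfl, hly.trans hy.2⟩ hy hly
    (hd.mono Ioi_subset_Ici_self)
  rw [slope_def_field, h0, sub_zero, le_div_iff₀ (sub_pos.2 hly)] at h1
  rw [div_mul_eq_mul_div, one_mul, le_div_iff₀ hs]
  linarith

theorem br_of {τ : ℝ → ℝ} {a c b c' d e : ℕ → ℝ} (h : TpcInftyZero τ a c b c' d e) :
    Br τ (Sum.elim a b) (Sum.elim c c') (Sum.elim (fun i => 1 / d i) (fun j => 1 / e j)) where
  maps := h.mapsTo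
  Lpos := by
    rintro (i | j)
    · exact (h.b_pos 0).le.trans (h.a_mem i).1
    · exact (h.b_pos j).le
  lt := by
    rintro (i | j)
    · exact (h.a_mem i).2.1
    · exact h.b_lt j
  R_le := by
    rintro (i | j)
    · exact (h.a_mem i).2.2
    · exact h.c'_le j
  disj := by
    convert h.branch_disj using 3 with p
    rcases p with i | j <;> rfl
  conv := by
    rintro (i | j)
    · exact h.conv_a i
    · exact h.conv_b j
  zero := by
    rintro (i | j)
    · exact h.map_a i
    · exact h.map_b j
  w_nonneg := by
    rintro (i | j)
    · exact (one_div_pos.2 (h.d_pos i)).le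
    · exact (one_div_pos.2 (h.e_pos j)).le
  slope := by
    rintro (i | j)
    · exact slope_aux (h.conv_a i) (h.map_a i) (h.deriv_a i) (h.d_pos i)
    · exact slope_aux (h.conv_b j) (h.map_b j) (h.deriv_b j) (h.e_pos j)
  cover := by
    obtain ⟨E, hE, hcov⟩ := h.cover
    unfold lam
    rw [Measure.restrict_apply' measurableSet_Icc]
    refine measure_mono_null ?_ (hE.measure_zero volume)
    rintro y ⟨hy1, hy2⟩
    rcases hcov hy2 with (h1 | h1) | h1
    · obtain ⟨i, hi⟩ := mem_iUnion.1 h1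
      exact absurd (mem_iUnion.2 ⟨Sum.inl i, hi⟩) hy1
    · obtain ⟨i, hi⟩ := mem_iUnion.1 h1
      exact absurd (mem_iUnion.2 ⟨Sum.inr i, hi⟩) hy1
    · exact h1

theorem core_of {τ : ℝ → ℝ} {a c b c' d e : ℕ → ℝ} (h : TpcInftyZero τ a c b c' d e) :
    Core (TT τ (Sum.elim a b) (Sum.elim c c')) (Sum.elim a b) (Sum.elim c c')
      (Sum.elim (fun i => 1 / d i) (fun j => 1 / e j)) (PSI τ (Sum.elim a b) (Sum.elim c c')) b
      (∑' j, 1 / e j) (∑' i, 1 / d i) := by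
  have hb := br_of h
  exact
  { meas := hb.TT_meas
    maps := hb.TT_maps
    Lpos := hb.Lpos
    cdf := fun m _ hm x hx => hb.cdf m hm hx
    ψ_mem := fun p x hx => hb.PSI_mem p hx
    ψ_conc := hb.PSI_conc
    ψ_le := fun p x hx => hb.PSI_le p hx
    b_pos := h.b_pos
    b_lim := h.b_lim
    cut := by
      intro j p
      by_contra hcon
      push Not at hcon
      by_cases hp : p = Sum.inr j
      · subst hp; exact lt_irrefl _ hcon.2
      · refine (Set.disjoint_left.1 (hb.disj hp)) (a := b j) ⟨hcon.2.le, hcon.1⟩ ?_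
        exact ⟨le_rfl, h.b_lt j⟩
    w_nonneg := hb.w_nonneg
    sum_D := h.sum_e.hasSum
    D_lt := h.D₁_lt
    sum_W := h.sum_d.hasSum
    L_ge := fun i => (h.a_mem i).1 }

end PCM

end

/-- Any `τ ∈ T_pc^{∞,0}(I)` admits a unique absolutely continuous invariant probability
measure `μ = f*·λ`, whose density `f*` is non-negative and non-increasing. -/
theorem stmt6 (τ : ℝ → ℝ) (a c b c' d e : ℕ → ℝ)
    (hτ : TpcInftyZero τ a c b c' d e) :
    ∃ f : ℝ → ℝ, MeasureTheory.Integrable f lam ∧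
      (∀ x ∈ Set.Icc (0:ℝ) 1, 0 ≤ f x) ∧
      AntitoneOn f (Set.Icc 0 1) ∧
      (∫ x, f x ∂lam) = 1 ∧
      (∀ A : Set ℝ, MeasurableSet A → A ⊆ Set.Icc 0 1 →
        lam.withDensity (fun x => ENNReal.ofReal (f x)) (τ ⁻¹' A) =
        lam.withDensity (fun x => ENNReal.ofReal (f x)) A) ∧
      (∀ ν : MeasureTheory.Measure ℝ, MeasureTheory.IsProbabilityMeasure ν →
        ν ≪ lam →
        (∀ A : Set ℝ, MeasurableSet A → A ⊆ Set.Icc 0 1 → ν (τ ⁻¹' A) = ν A) →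
        ν = lam.withDensity (fun x => ENNReal.ofReal (f x))) := by
  classical
  have hb := PCM.br_of hτ
  have hcore := PCM.core_of hτ
  obtain ⟨μ, M, hgood, hU, hlim⟩ := hcore.limit
  have hfin := hgood.fin
  obtain ⟨f, hfint, hf0, hanti, hμf⟩ := hgood.density
  have hinv := hcore.inv hlim
  set L : ℕ ⊕ ℕ → ℝ := Sum.elim a b
  set R : ℕ ⊕ ℕ → ℝ := Sum.elim c c'
  have hae : ∀ A : Set ℝ, (τ ⁻¹' A : Set ℝ) =ᵐ[lam] (PCM.TT τ L R ⁻¹' A : Set ℝ) := by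
    intro A
    have h1 : ∀ᵐ x ∂lam, x ∈ ⋃ p, Ico (L p) (R p) := by
      rw [ae_iff]; exact hb.cover
    filter_upwards [h1] with x hx
    have : PCM.TT τ L R x = τ x := if_pos hx
    apply propext
    change τ x ∈ A ↔ PCM.TT τ L R x ∈ A
    rw [this]
  refine ⟨f, hfint, fun x _ => hf0 x, hanti, ?_, ?_, ?_⟩
  · have h1 : μ univ = ENNReal.ofReal (∫ x, f x ∂lam) := by
      rw [hμf, withDensity_apply _ MeasurableSet.univ, Measure.restrict_univ,
        ofReal_integral_eq_lintegral_ofReal hfint (Eventually.of_forall hf0)]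
    rw [← hU, measureReal_def, h1, ENNReal.toReal_ofReal (integral_nonneg hf0)]
  · intro A hA _
    rw [← hμf, measure_congr (hgood.ac.ae_le (hae A))]
    conv_rhs => rw [← hinv]
    rw [Measure.map_apply hcore.meas hA]
  · intro ν hν hac hνinv
    rw [← hμf]
    refine hcore.unique hlim ν hac ?_
    ext A hA
    rw [Measure.map_apply hcore.meas hA]
    have hA' : MeasurableSet (A ∩ Icc 0 1) := hA.inter measurableSet_Icc
    have h1 := hνinv (A ∩ Icc 0 1) hA' inter_subset_right
    rw [measure_congr (hac.ae_le (hae _))] at h1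
    have h2 : PCM.TT τ L R ⁻¹' (A ∩ Icc 0 1) = PCM.TT τ L R ⁻¹' A := by
      ext x
      exact ⟨fun hx => hx.1, fun hx => ⟨hx, hcore.maps x⟩⟩
    rw [h2] at h1
    rw [h1]
    have h3 : ν (Icc (0:ℝ) 1)ᶜ = 0 := hac (by
      unfold lam
      rw [Measure.restrict_apply' measurableSet_Icc]; simp)
    exact measure_inter_conull h3
end
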